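/- Fix an integer d ≥ 1, p ∈ (1,∞), a penalty function φ, and let (μ_t)_{t≥0} be a convolution semigroup in 𝒫_p(ℝ^d) with 𝒲_p(μ_t, δ_0) → 0 as t ↓ 0. Let f ∈ C₀(ℝ^d) and define u : [0,∞) → C₀(ℝ^d) by u(t) := 𝒮(t)f. Then u is a viscosity solution of the equation ∂_t u(t,x) = A^μ u(t)(x) + φ*(|∇u(t,x)|) on (0,∞)×ℝ^d with initial condition u(0,x) = f(x). -/

import Mathlib

open MeasureTheory Filter Topology ENNReal NNReal Set ZeroAtInfty
noncomputable section

/-- Euclidean space ℝ^d. -/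
abbrev Ed (d : ℕ) := EuclideanSpace ℝ (Fin d)

/-- `𝒫_p(ℝ^d)`: Borel probability measures with finite `p`-th moment. -/
def MemPp {d : ℕ} (p : ℝ) (μ : Measure (Ed d)) : Prop :=
  IsProbabilityMeasure μ ∧ ∫⁻ x, (‖x‖₊ : ℝ≥0∞) ^ p ∂μ < ∞

/-- `γ` is a coupling of `μ` and `ν`. -/
def IsCoupling {d : ℕ} (γ : Measure (Ed d × Ed d)) (μ ν : Measure (Ed d)) : Prop :=
  γ.map Prod.fst = μ ∧ γ.map Prod.snd = ν

/-- The `p`-Wasserstein distance `𝒲_p(μ, ν)`. -/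
def Wp {d : ℕ} (p : ℝ) (μ ν : Measure (Ed d)) : ℝ :=
  (⨅ γ ∈ {γ : Measure (Ed d × Ed d) | IsCoupling γ μ ν},
    (∫⁻ q, (‖q.2 - q.1‖₊ : ℝ≥0∞) ^ p ∂γ) ^ (1 / p)).toReal

/-- The scaled penalty `φ_t(r) = t·φ(r/t)` for `t > 0`; `φ_0(0) = 0`, `φ_0(r) = ∞` for `r > 0`. -/
def phit (φ : ℝ≥0 → ℝ≥0∞) (t : ℝ) (r : ℝ≥0) : ℝ≥0∞ :=
  if 0 < t then (t.toNNReal : ℝ≥0∞) * φ (r / t.toNNReal) else (if r = 0 then 0 else ∞)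

/-- `φ` is a penalty function: lower semicontinuous, convex, increasing, not constant,
`φ(0) = 0`, and `x ↦ φ(x^{1/p})` is convex. -/
structure IsPenalty (p : ℝ) (φ : ℝ≥0 → ℝ≥0∞) : Prop where
  lsc : LowerSemicontinuous φ
  convex : ∀ a b l m : ℝ≥0, l + m = 1 →
    φ (l * a + m * b) ≤ (l : ℝ≥0∞) * φ a + (m : ℝ≥0∞) * φ b
  mono : Monotone φ
  not_const : ∃ a b, φ a ≠ φ b
  map_zero : φ 0 = 0
  convex_rpow : ∀ a b l m : ℝ≥0, l + m = 1 →
    φ ((l * a + m * b) ^ (1 / p)) ≤ (l : ℝ≥0∞) * φ (a ^ (1 / p)) + (m : ℝ≥0∞) * φ (b ^ (1 / p))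

/-- The convex conjugate `φ*(y) = sup_{x ≥ 0} (xy − φ(x))`. -/
def phiStar (φ : ℝ≥0 → ℝ≥0∞) (y : ℝ≥0) : ℝ≥0∞ :=
  ⨆ x : ℝ≥0, ((x * y : ℝ≥0) : ℝ≥0∞) - φ x

/-- The one-step operator `S(t)f(x) = sup_ν ( ∫ f(x+y) ν(dy) − φ_t(𝒲_p(μ_t, ν)) )`. -/
def Sop {d : ℕ} (p : ℝ) (φ : ℝ≥0 → ℝ≥0∞) (μt : Measure (Ed d)) (t : ℝ)
    (f : Ed d → ℝ) (x : Ed d) : ℝ :=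
  sSup { r : ℝ | ∃ ν : Measure (Ed d), MemPp p ν ∧ ∃ c : ℝ, 0 ≤ c ∧
    phit φ t (Wp p μt ν).toNNReal ≤ ENNReal.ofReal c ∧ r = (∫ y, f (x + y) ∂ν) - c }

/-- The iterated operator `𝒮ⁿ(t) = S(2⁻ⁿ)^{∘ k} ∘ S(t − k·2⁻ⁿ)`, `k = ⌊2ⁿ t⌋`. -/
def SiterN {d : ℕ} (p : ℝ) (φ : ℝ≥0 → ℝ≥0∞) (μ : ℝ → Measure (Ed d)) (n : ℕ) (t : ℝ)
    (f : Ed d → ℝ) : Ed d → ℝ :=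
  (fun g => Sop p φ (μ ((2 : ℝ) ^ n)⁻¹) ((2 : ℝ) ^ n)⁻¹ g)^[⌊(2:ℝ)^n * t⌋₊]
    (Sop p φ (μ (t - ⌊(2:ℝ)^n * t⌋₊ * ((2:ℝ)^n)⁻¹)) (t - ⌊(2:ℝ)^n * t⌋₊ * ((2:ℝ)^n)⁻¹) f)

/-- The limiting operator `𝒮(t)f = lim_n 𝒮ⁿ(t)f` (a decreasing limit, i.e. an infimum). -/
def Slim {d : ℕ} (p : ℝ) (φ : ℝ≥0 → ℝ≥0∞) (μ : ℝ → Measure (Ed d)) (t : ℝ)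
    (f : Ed d → ℝ) (x : Ed d) : ℝ :=
  ⨅ n : ℕ, SiterN p φ μ n t f x

/-- `f ∈ C₀(ℝ^d)`: continuous and vanishing at infinity. -/
def IsC0 {d : ℕ} (f : Ed d → ℝ) : Prop :=
  Continuous f ∧ Tendsto f (cocompact (Ed d)) (𝓝 0)

/-- `(μ_t)_{t ≥ 0}` is a convolution semigroup in `𝒫_p(ℝ^d)`. -/
def IsConvSemigroup {d : ℕ} (p : ℝ) (μ : ℝ → Measure (Ed d)) : Prop :=
  μ 0 = Measure.dirac 0 ∧ (∀ s t : ℝ, 0 ≤ s → 0 ≤ t → μ (s + t) = (μ s).conv (μ t)) ∧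
    ∀ t : ℝ, 0 ≤ t → MemPp p (μ t)

/-- `𝒲_p(μ_t, δ_0) → 0` as `t ↓ 0`. -/
def WContinuousAtZero {d : ℕ} (p : ℝ) (μ : ℝ → Measure (Ed d)) : Prop :=
  Tendsto (fun t => Wp p (μ t) (Measure.dirac 0)) (𝓝[>] (0:ℝ)) (𝓝 0)

/-- The semigroup of the underlying Lévy process, `S^μ(t)f(x) = ∫ f(x+y) μ_t(dy)`. -/
def Smu {d : ℕ} (μ : ℝ → Measure (Ed d)) (t : ℝ) (f : Ed d → ℝ) (x : Ed d) : ℝ :=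
  ∫ y, f (x + y) ∂(μ t)

/-- `f ∈ D(A^μ)` with `A^μ f = Af`: `(S^μ(t)f − f)/t → Af` uniformly as `t ↓ 0`. -/
def HasGenerator {d : ℕ} (μ : ℝ → Measure (Ed d)) (f Af : Ed d → ℝ) : Prop :=
  TendstoUniformly (fun t x => (Smu μ t f x - f x) / t) Af (𝓝[>] (0:ℝ))

/-- `f ∈ C₀¹(ℝ^d)`: continuously differentiable, vanishing at infinity, with gradient
vanishing at infinity. -/
def IsC01 {d : ℕ} (f : Ed d → ℝ) : Prop :=
  IsC0 f ∧ ContDiff ℝ 1 f ∧ Tendsto (fun x => gradient f x) (cocompact (Ed d)) (𝓝 0)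

/-- A test function: `v : (0,∞) → C₀(ℝ^d)` differentiable w.r.t. the supremum norm with
derivative `v'`, and `v(t) ∈ D(A^μ) ∩ C₀¹(ℝ^d)` for all `t > 0`. -/
def IsTestFunction {d : ℕ} (μ : ℝ → Measure (Ed d)) (v v' : ℝ → C₀(Ed d, ℝ)) : Prop :=
  ∀ t : ℝ, 0 < t →
    HasDerivAt v (v' t) t ∧ (∃ Af : Ed d → ℝ, HasGenerator μ (⇑(v t)) Af) ∧ IsC01 (⇑(v t))

/-- `u` is a viscosity subsolution of `∂_t u = A^μ u + φ*(|∇u|)`, `u(0) = f`. -/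
def IsViscositySubsol {d : ℕ} (φ : ℝ≥0 → ℝ≥0∞) (μ : ℝ → Measure (Ed d))
    (f : C₀(Ed d, ℝ)) (u : ℝ → C₀(Ed d, ℝ)) : Prop :=
  ContinuousOn u (Ici 0) ∧ u 0 = f ∧
  ∀ t : ℝ, 0 < t → ∀ x : Ed d, ∀ v v' : ℝ → C₀(Ed d, ℝ), IsTestFunction μ v v' →
    (∀ s : ℝ, 0 < s → ∀ y, u s y ≤ v s y) → v t x = u t x →
    ∀ Av : Ed d → ℝ, HasGenerator μ (⇑(v t)) Av →
      (v' t x : EReal) ≤ (Av x : EReal) + (phiStar φ ‖gradient (⇑(v t)) x‖₊ : EReal)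

/-- `u` is a viscosity supersolution of `∂_t u = A^μ u + φ*(|∇u|)`, `u(0) = f`. -/
def IsViscositySupersol {d : ℕ} (φ : ℝ≥0 → ℝ≥0∞) (μ : ℝ → Measure (Ed d))
    (f : C₀(Ed d, ℝ)) (u : ℝ → C₀(Ed d, ℝ)) : Prop :=
  ContinuousOn u (Ici 0) ∧ u 0 = f ∧
  ∀ t : ℝ, 0 < t → ∀ x : Ed d, ∀ v v' : ℝ → C₀(Ed d, ℝ), IsTestFunction μ v v' →
    (∀ s : ℝ, 0 < s → ∀ y, v s y ≤ u s y) → v t x = u t x →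
    ∀ Av : Ed d → ℝ, HasGenerator μ (⇑(v t)) Av →
      (Av x : EReal) + (phiStar φ ‖gradient (⇑(v t)) x‖₊ : EReal) ≤ (v' t x : EReal)

/-!
Gluing couplings and using the convexity of `x ↦ φ (x ^ (1 / p))` gives `S(s) S(t) ≤ S(s + t)`, so
the dyadic iterates decrease to `𝒮(t)f`; Dini's theorem makes the convergence uniform on compact
sets, while `S^μ(t)f ≤ 𝒮(t)f ≤ S(t)f` controls infinity and short times. Passing to the limit
yields two dynamic programming inequalities over a dyadic step `δ`: `𝒮(t)f ≤ S(δ) 𝒮(t - δ)f`, and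
`S^μ(δ) 𝒮(t - δ)f (x + δ b) - δ c ≤ 𝒮(t)f x` whenever `φ |b| ≤ c`, because drifting the reference
law with velocity `b` is one of the competitors in `S`.

At a contact point of `𝒮(t)f` with a test function `v`, the second inequality, expanded to first
order in `δ`, gives `A^μ v + ⟨∇v, b⟩ - c ≤ ∂ₜ v`; the supremum over `b` and `c` is the supersolution
inequality. For the subsolution inequality, transporting mass from `a` to `b` raises `v` near the
contact point by at most `(|∇v| + ε) |b - a|`, up to a superlinear term that is absorbed by the
penalty, and the trade-off against the penalty is bounded by the conjugate `φ* (|∇v|)`.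
-/

/-! ### Couplings and the Wasserstein distance -/

section Wasserstein

variable {d : ℕ} {p : ℝ} {μ ν : Measure (Ed d)} {γ : Measure (Ed d × Ed d)}

/-- The transport cost `(∫ |y - x|^p dγ)^{1/p}` of a coupling, written as the `L^p` norm of the
displacement so that Minkowski's inequality and the comparison of `L^p` norms apply to it. -/
def transportCost (p : ℝ) (γ : Measure (Ed d × Ed d)) : ℝ≥0∞ :=
  eLpNorm (fun q => q.2 - q.1) (ENNReal.ofReal p) γ

theorem lintegral_rpow_nnnorm_eq_eLpNorm {Ω E : Type*} [MeasurableSpace Ω] [NormedAddCommGroup E]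
    (hp : 0 < p) (m : Measure Ω) (g : Ω → E) :
    (∫⁻ ω, (‖g ω‖₊ : ℝ≥0∞) ^ p ∂m) ^ (1 / p) = eLpNorm g (ENNReal.ofReal p) m := by
  rw [eLpNorm_eq_lintegral_rpow_enorm_toReal (ENNReal.ofReal_pos.2 hp).ne' ENNReal.ofReal_ne_top,
    ENNReal.toReal_ofReal hp.le]
  rfl

theorem wp_eq_iInf_transportCost (hp : 0 < p) (μ ν : Measure (Ed d)) :
    Wp p μ ν = (⨅ γ ∈ {γ | IsCoupling γ μ ν}, transportCost p γ).toReal := by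
  simp only [Wp, transportCost, lintegral_rpow_nnnorm_eq_eLpNorm hp]

theorem memPp_iff_memLp (hp : 0 < p) :
    MemPp p μ ↔ IsProbabilityMeasure μ ∧ MemLp id (ENNReal.ofReal p) μ := by
  refine and_congr_right fun _ => ?_
  rw [MemLp, ← lintegral_rpow_nnnorm_eq_eLpNorm hp, ENNReal.rpow_lt_top_iff_of_pos (by positivity)]
  exact (and_iff_right aestronglyMeasurable_id).symm

theorem memPp_map_iff {Ω : Type*} [MeasurableSpace Ω] {m : Measure Ω} [IsProbabilityMeasure m]
    {Y : Ω → Ed d} (hp : 0 < p) (hY : Measurable Y) :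
    MemPp p (m.map Y) ↔ MemLp Y (ENNReal.ofReal p) m := by
  rw [memPp_iff_memLp hp, memLp_map_measure_iff aestronglyMeasurable_id hY.aemeasurable]
  exact and_iff_right (Measure.isProbabilityMeasure_map hY.aemeasurable)

theorem memPp_dirac (hp : 0 < p) (a : Ed d) : MemPp p (Measure.dirac a) := by
  refine ⟨Measure.dirac.isProbabilityMeasure, ?_⟩
  rw [lintegral_dirac]
  exact ENNReal.rpow_lt_top_of_nonneg hp.le ENNReal.coe_ne_top

theorem IsCoupling.isProbabilityMeasure [IsProbabilityMeasure μ] (hγ : IsCoupling γ μ ν) :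
    IsProbabilityMeasure γ := by
  have : IsProbabilityMeasure (γ.map Prod.fst) := hγ.1 ▸ inferInstance
  exact Measure.isProbabilityMeasure_of_map Prod.fst

theorem isCoupling_prod (μ ν : Measure (Ed d)) [IsProbabilityMeasure μ] [IsProbabilityMeasure ν] :
    IsCoupling (μ.prod ν) μ ν := by
  constructor <;> simp

theorem IsCoupling.memLp_displacement (hp : 0 < p) (hμ : MemPp p μ) (hν : MemPp p ν)
    (hγ : IsCoupling γ μ ν) :
    MemLp (fun q : Ed d × Ed d => q.2 - q.1) (ENNReal.ofReal p) γ := by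
  have hfst := ((memPp_iff_memLp hp).1 hμ).2
  have hsnd := ((memPp_iff_memLp hp).1 hν).2
  rw [← hγ.1] at hfst
  rw [← hγ.2] at hsnd
  exact (hsnd.comp_of_map measurable_snd.aemeasurable).sub
    (hfst.comp_of_map measurable_fst.aemeasurable)

theorem wp_nonneg : 0 ≤ Wp p μ ν :=
  ENNReal.toReal_nonneg

theorem wp_le_of_isCoupling (hp : 0 < p) (hγ : IsCoupling γ μ ν) {s : ℝ} (hs : 0 ≤ s)
    (hcost : transportCost p γ ≤ ENNReal.ofReal s) : Wp p μ ν ≤ s := by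
  rw [wp_eq_iInf_transportCost hp]
  exact ENNReal.toReal_le_of_le_ofReal hs ((biInf_le (transportCost p) hγ).trans hcost)

theorem exists_isCoupling_transportCost_lt (hp : 0 < p) (hμ : MemPp p μ) (hν : MemPp p ν) {s : ℝ}
    (hs : Wp p μ ν < s) : ∃ γ, IsCoupling γ μ ν ∧ transportCost p γ < ENNReal.ofReal s := by
  have := hμ.1
  have := hν.1
  have hfinite : ⨅ γ ∈ {γ | IsCoupling γ μ ν}, transportCost p γ < ∞ :=
    (biInf_le (transportCost p) (isCoupling_prod μ ν)).trans_lt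
      ((isCoupling_prod μ ν).memLp_displacement hp hμ hν).2
  rw [wp_eq_iInf_transportCost hp] at hs
  simpa only [iInf_lt_iff, mem_ofPred_eq, exists_prop] using
    (ENNReal.lt_ofReal_iff_toReal_lt hfinite.ne).2 hs

theorem MemPp.map_add_right (hp : 0 < p) (hμ : MemPp p μ) (b : Ed d) :
    MemPp p (μ.map (· + b)) := by
  have := hμ.1
  exact (memPp_map_iff hp (measurable_add_const b)).2
    (((memPp_iff_memLp hp).1 hμ).2.add (memLp_const b))

theorem wp_map_add_right_le (hp : 0 < p) [IsProbabilityMeasure μ] (b : Ed d) :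
    Wp p μ (μ.map (· + b)) ≤ ‖b‖ := by
  have hmeas : Measurable fun y : Ed d => (y, y + b) := by fun_prop
  refine wp_le_of_isCoupling hp (γ := μ.map fun y => (y, y + b)) ⟨?_, ?_⟩ (norm_nonneg b) ?_
  · rw [Measure.map_map measurable_fst hmeas]
    exact Measure.map_id
  · rw [Measure.map_map measurable_snd hmeas]
    rfl
  · rw [transportCost, eLpNorm_map_measure (by fun_prop) hmeas.aemeasurable]
    simp only [Function.comp_def, add_sub_cancel_left]
    rw [eLpNorm_const _ (ENNReal.ofReal_pos.2 hp).ne' (NeZero.ne _)]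
    simp

theorem wp_self (hp : 0 < p) [IsProbabilityMeasure μ] : Wp p μ μ = 0 := by
  have hle := wp_map_add_right_le (μ := μ) hp 0
  simp only [add_zero, Measure.map_id', norm_zero] at hle
  exact le_antisymm hle wp_nonneg

theorem integral_norm_le_of_eLpNorm_le {Ω E : Type*} [MeasurableSpace Ω] [NormedAddCommGroup E]
    {m : Measure Ω} [IsProbabilityMeasure m] {g : Ω → E} (hp : 1 ≤ p)
    (hg : MemLp g (ENNReal.ofReal p) m) {s : ℝ} (hs : 0 ≤ s)
    (hcost : eLpNorm g (ENNReal.ofReal p) m ≤ ENNReal.ofReal s) : ∫ ω, ‖g ω‖ ∂m ≤ s := by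
  rw [integral_norm_eq_lintegral_enorm hg.1, ← eLpNorm_one_eq_lintegral_enorm]
  exact ENNReal.toReal_le_of_le_ofReal hs
    ((eLpNorm_le_eLpNorm_of_exponent_le (ENNReal.one_le_ofReal.2 hp) hg.1).trans hcost)

theorem integral_norm_rpow_le_of_eLpNorm_le {Ω E : Type*} [MeasurableSpace Ω]
    [NormedAddCommGroup E] {m : Measure Ω} {g : Ω → E} (hp : 0 < p)
    (hg : MemLp g (ENNReal.ofReal p) m) {s : ℝ} (hs : 0 ≤ s)
    (hcost : eLpNorm g (ENNReal.ofReal p) m ≤ ENNReal.ofReal s) : ∫ ω, ‖g ω‖ ^ p ∂m ≤ s ^ p := by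
  rw [hg.eLpNorm_eq_integral_rpow_norm (ENNReal.ofReal_pos.2 hp).ne' ENNReal.ofReal_ne_top,
    ENNReal.toReal_ofReal hp.le, ENNReal.ofReal_le_ofReal_iff hs] at hcost
  exact (Real.rpow_inv_le_iff_of_pos (integral_nonneg fun _ => by positivity) hs hp).1 hcost

variable {f g : Ed d → ℝ} {C D : ℝ}

theorem IsCoupling.integral_le_integral_add (hp : 1 ≤ p) (hμ : MemPp p μ) (hν : MemPp p ν)
    (hC : 0 ≤ C) (hD : 0 ≤ D) (hf : Integrable f ν) (hg : Integrable g μ)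
    (hfg : ∀ a b, f b ≤ g a + C * ‖b - a‖ + D * ‖b - a‖ ^ p) (hγ : IsCoupling γ μ ν) {s : ℝ}
    (hs : 0 ≤ s) (hcost : transportCost p γ ≤ ENNReal.ofReal s) :
    ∫ z, f z ∂ν ≤ (∫ y, g y ∂μ) + C * s + D * s ^ p := by
  have hp₀ : 0 < p := one_pos.trans_le hp
  have := hμ.1
  have := hγ.isProbabilityMeasure
  have hdisp := hγ.memLp_displacement hp₀ hμ hν
  have hnorm := (hdisp.integrable (ENNReal.one_le_ofReal.2 hp)).norm.const_mul C
  have hrpow := (hdisp.integrable_norm_rpow (ENNReal.ofReal_pos.2 hp₀).ne'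
    ENNReal.ofReal_ne_top).const_mul D
  rw [ENNReal.toReal_ofReal hp₀.le] at hrpow
  rw [← hγ.2] at hf ⊢
  rw [← hγ.1] at hg ⊢
  rw [integral_map measurable_snd.aemeasurable hf.1, integral_map measurable_fst.aemeasurable hg.1]
  have hg' : Integrable (fun q : Ed d × Ed d => g q.1) γ := hg.comp_measurable measurable_fst
  have hg_norm : Integrable (fun q : Ed d × Ed d => g q.1 + C * ‖q.2 - q.1‖) γ := hg'.add hnorm
  calc ∫ q, f q.2 ∂γ
      ≤ ∫ q, g q.1 + C * ‖q.2 - q.1‖ + D * ‖q.2 - q.1‖ ^ p ∂γ :=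
        integral_mono (hf.comp_measurable measurable_snd) (hg_norm.add hrpow)
          fun q => hfg q.1 q.2
    _ = (∫ q, g q.1 ∂γ) + C * (∫ q, ‖q.2 - q.1‖ ∂γ) + D * ∫ q, ‖q.2 - q.1‖ ^ p ∂γ := by
        rw [integral_add hg_norm hrpow, integral_add hg' hnorm, integral_const_mul,
          integral_const_mul]
    _ ≤ (∫ q, g q.1 ∂γ) + C * s + D * s ^ p := by
        gcongr
        · exact integral_norm_le_of_eLpNorm_le hp hdisp hs hcost
        · exact integral_norm_rpow_le_of_eLpNorm_le hp₀ hdisp hs hcost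

theorem integral_le_integral_add_wp (hp : 1 ≤ p) (hμ : MemPp p μ) (hν : MemPp p ν)
    (hC : 0 ≤ C) (hD : 0 ≤ D) (hf : Integrable f ν) (hg : Integrable g μ)
    (hfg : ∀ a b, f b ≤ g a + C * ‖b - a‖ + D * ‖b - a‖ ^ p) :
    ∫ z, f z ∂ν ≤ (∫ y, g y ∂μ) + C * Wp p μ ν + D * Wp p μ ν ^ p := by
  have hp₀ : 0 < p := one_pos.trans_le hp
  have hcont : Continuous fun s : ℝ => (∫ y, g y ∂μ) + C * s + D * s ^ p := by
    have := Real.continuous_rpow_const hp₀.le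
    fun_prop
  refine ge_of_tendsto (hcont.continuousWithinAt (s := Ioi (Wp p μ ν))).tendsto
    (eventually_nhdsWithin_of_forall fun s hs => ?_)
  obtain ⟨γ, hγ, hcost⟩ := exists_isCoupling_transportCost_lt hp₀ hμ hν hs
  exact hγ.integral_le_integral_add hp hμ hν hC hD hf hg hfg (wp_nonneg.trans hs.le) hcost.le

end Wasserstein

/-! ### Penalty functions and their conjugates -/

section Penalty

variable {p : ℝ} {φ : ℝ≥0 → ℝ≥0∞} {r s c k : ℝ}

/-- `(r, c)` lies in the epigraph of the penalty `φ`: real radius `r ≥ 0`, real cost `c ≥ 0` and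
`φ r ≤ c`. Working with the epigraph avoids arithmetic with the infinite values of `φ`. -/
structure PenaltyLE (φ : ℝ≥0 → ℝ≥0∞) (r c : ℝ) : Prop where
  radius_nonneg : 0 ≤ r
  cost_nonneg : 0 ≤ c
  le : φ r.toNNReal ≤ ENNReal.ofReal c

theorem phit_toNNReal_le_ofReal_iff {t : ℝ} (ht : 0 < t) :
    phit φ t r.toNNReal ≤ ENNReal.ofReal c ↔ φ (r / t).toNNReal ≤ ENNReal.ofReal (c / t) := by
  rw [phit, if_pos ht, Real.toNNReal_div' ht.le, ENNReal.ofReal_div_of_pos ht,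
    ENNReal.le_div_iff_mul_le (Or.inl (ENNReal.ofReal_pos.2 ht).ne') (Or.inl ENNReal.ofReal_ne_top),
    mul_comm]
  rfl

theorem IsPenalty.penaltyLE_zero (hφ : IsPenalty p φ) : PenaltyLE φ 0 0 :=
  ⟨le_rfl, le_rfl, by simp [hφ.map_zero]⟩

theorem PenaltyLE.mono (hφ : IsPenalty p φ) (h : PenaltyLE φ r c) (hs : 0 ≤ s) (hsr : s ≤ r) :
    PenaltyLE φ s c :=
  ⟨hs, h.cost_nonneg, (hφ.mono (Real.toNNReal_le_toNNReal hsr)).trans h.le⟩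

theorem PenaltyLE.convex_combination (hφ : IsPenalty p φ) (h : PenaltyLE φ r c)
    (h' : PenaltyLE φ s k) {a b : ℝ} (ha : 0 ≤ a) (hb : 0 ≤ b) (hab : a + b = 1) :
    PenaltyLE φ (a * r + b * s) (a * c + b * k) := by
  obtain ⟨hr, hc, hle⟩ := h
  obtain ⟨hs, hk, hle'⟩ := h'
  refine ⟨by positivity, by positivity, ?_⟩
  rw [Real.toNNReal_add (by positivity) (by positivity), Real.toNNReal_mul ha,
    Real.toNNReal_mul hb, ENNReal.ofReal_add (by positivity) (by positivity),
    ENNReal.ofReal_mul ha, ENNReal.ofReal_mul hb]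
  refine (hφ.convex _ _ _ _ ?_).trans (add_le_add (mul_le_mul_right hle _)
    (mul_le_mul_right hle' _))
  rw [← Real.toNNReal_add ha hb, hab, Real.toNNReal_one]

/-- The epigraph of `x ↦ φ (x ^ (1 / p))`, whose convexity is the assumption on penalty functions
behind Jensen's inequality for `p`-th powers. -/
def rpowEpigraph (p : ℝ) (φ : ℝ≥0 → ℝ≥0∞) : Set (ℝ × ℝ) :=
  {z | 0 ≤ z.1 ∧ PenaltyLE φ (z.1 ^ (1 / p)) z.2}

theorem rpow_mem_rpowEpigraph_iff (hp : 0 < p) (hr : 0 ≤ r) :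
    (r ^ p, c) ∈ rpowEpigraph p φ ↔ PenaltyLE φ r c := by
  simp only [rpowEpigraph, mem_ofPred_eq, one_div, Real.rpow_rpow_inv hr hp.ne',
    Real.rpow_nonneg hr, true_and]

theorem convex_rpowEpigraph (hφ : IsPenalty p φ) : Convex ℝ (rpowEpigraph p φ) := by
  rintro ⟨x, c⟩ ⟨hx, -, hc, hle⟩ ⟨y, k⟩ ⟨hy, -, hk, hle'⟩ a b ha hb hab
  simp only at hx hc hle hy hk hle'
  have hxy : 0 ≤ a * x + b * y := by positivity
  refine ⟨hxy, Real.rpow_nonneg hxy _, show 0 ≤ a * c + b * k by positivity, ?_⟩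
  simp only [Prod.smul_mk, smul_eq_mul, Prod.mk_add_mk]
  rw [Real.toNNReal_rpow_of_nonneg hx] at hle
  rw [Real.toNNReal_rpow_of_nonneg hy] at hle'
  rw [Real.toNNReal_rpow_of_nonneg hxy, Real.toNNReal_add (by positivity) (by positivity),
    Real.toNNReal_mul ha, Real.toNNReal_mul hb, ENNReal.ofReal_add (by positivity) (by positivity),
    ENNReal.ofReal_mul ha, ENNReal.ofReal_mul hb]
  refine (hφ.convex_rpow _ _ _ _ ?_).trans (add_le_add (mul_le_mul_right hle _)
    (mul_le_mul_right hle' _))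
  rw [← Real.toNNReal_add ha hb, hab, Real.toNNReal_one]

theorem isClosed_rpowEpigraph (hp : 0 ≤ p) (hφ : IsPenalty p φ) :
    IsClosed (rpowEpigraph p φ) := by
  have hrpow : Continuous fun z : ℝ × ℝ => z.1 ^ (1 / p) :=
    (Real.continuous_rpow_const (by positivity)).comp continuous_fst
  have hclosed : IsClosed {z : ℝ × ℝ | φ (z.1 ^ (1 / p)).toNNReal ≤ ENNReal.ofReal z.2} :=
    hφ.lsc.isClosed_epigraph.preimage ((continuous_real_toNNReal.comp hrpow).prodMk
      (ENNReal.continuous_ofReal.comp continuous_snd))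
  have heq : rpowEpigraph p φ = {z | 0 ≤ z.1} ∩ ({z | 0 ≤ z.1 ^ (1 / p)} ∩ ({z | 0 ≤ z.2} ∩
      {z | φ (z.1 ^ (1 / p)).toNNReal ≤ ENNReal.ofReal z.2})) := by
    ext z
    exact and_congr_right fun _ => ⟨fun h => ⟨h.1, h.2, h.3⟩, fun h => ⟨h.1, h.2.1, h.2.2⟩⟩
  rw [heq]
  exact (isClosed_le continuous_const continuous_fst).inter
    ((isClosed_le continuous_const hrpow).inter
      ((isClosed_le continuous_const continuous_snd).inter hclosed))

theorem penaltyLE_integral (hp : 0 < p) (hφ : IsPenalty p φ) {Ω : Type*} [MeasurableSpace Ω]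
    {m : Measure Ω} [IsProbabilityMeasure m] {W c : Ω → ℝ} (h : ∀ ω, PenaltyLE φ (W ω) (c ω))
    (hW : Integrable (fun ω => W ω ^ p) m) (hc : Integrable c m) :
    PenaltyLE φ ((∫ ω, W ω ^ p ∂m) ^ (1 / p)) (∫ ω, c ω ∂m) := by
  have hmem := (convex_rpowEpigraph hφ).integral_mem (isClosed_rpowEpigraph hp.le hφ)
    (Eventually.of_forall fun ω => (rpow_mem_rpowEpigraph_iff hp (h ω).radius_nonneg).2 (h ω))
    (hW.prodMk hc)
  rw [integral_pair hW hc] at hmem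
  exact hmem.2

theorem PenaltyLE.rpow_div_mul (hp : 0 < p) (hφ : IsPenalty p φ) (h : PenaltyLE φ r c)
    (hs : 0 ≤ s) (hsr : s ≤ r) : PenaltyLE φ s ((s / r) ^ p * c) := by
  rcases h.radius_nonneg.eq_or_lt' with rfl | hr
  · simpa [le_antisymm hsr hs, Real.zero_rpow hp.ne'] using hφ.penaltyLE_zero
  have hzero := (rpow_mem_rpowEpigraph_iff hp le_rfl).2 hφ.penaltyLE_zero
  have hmem := (convex_rpowEpigraph hφ).starConvex hzero
    ((rpow_mem_rpowEpigraph_iff hp hr.le).2 h) (sub_nonneg.2 (Real.rpow_le_one (div_nonneg hs hr.le)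
      ((div_le_one hr).2 hsr) hp.le)) (Real.rpow_nonneg (div_nonneg hs hr.le) p) (by ring)
  rw [← rpow_mem_rpowEpigraph_iff hp hs]
  convert hmem using 1
  simp [Real.zero_rpow hp.ne', Real.div_rpow hs hr.le, (Real.rpow_pos_of_pos hr p).ne']

theorem IsPenalty.exists_rpow_growth (hp : 0 < p) (hφ : IsPenalty p φ) :
    ∃ α β : ℝ, 0 < α ∧ 0 ≤ β ∧ ∀ r c, PenaltyLE φ r c → α * r ^ p - β ≤ c := by
  obtain ⟨s, hs⟩ : ∃ s, φ s ≠ 0 := by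
    by_contra! hzero
    obtain ⟨a, b, hab⟩ := hφ.not_const
    exact hab (by rw [hzero, hzero])
  have hs₀ : 0 < s := pos_iff_ne_zero.2 fun h => hs (by rw [h, hφ.map_zero])
  obtain ⟨β, hβ₀, hβ⟩ := ENNReal.lt_iff_exists_nnreal_btwn.1 (pos_iff_ne_zero.2 hs)
  have hsp : (0 : ℝ) < (s : ℝ) ^ p := by positivity
  refine ⟨β / (s : ℝ) ^ p, β, div_pos (by exact_mod_cast hβ₀) hsp, β.coe_nonneg, fun r c h => ?_⟩
  rw [div_mul_eq_mul_div, mul_div_assoc, ← Real.div_rpow h.radius_nonneg s.coe_nonneg]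
  rcases le_total r s with hrs | hsr
  · have : (r / s) ^ p ≤ 1 := Real.rpow_le_one (div_nonneg h.radius_nonneg s.coe_nonneg)
      ((div_le_one (by exact_mod_cast hs₀)).2 hrs) hp.le
    linarith [mul_le_mul_of_nonneg_left this β.coe_nonneg, h.cost_nonneg]
  · have hr : 0 < r := lt_of_lt_of_le (by exact_mod_cast hs₀) hsr
    have hscaled := h.rpow_div_mul hp hφ s.coe_nonneg hsr
    have hβc : (β : ℝ) ≤ (s / r) ^ p * c := by
      rw [← ENNReal.ofReal_le_ofReal_iff hscaled.cost_nonneg, ENNReal.ofReal_coe_nnreal]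
      exact hβ.le.trans (by simpa using hscaled.le)
    calc β * (r / s) ^ p - β ≤ (s / r) ^ p * c * (r / s) ^ p := by
          linarith [β.coe_nonneg, mul_le_mul_of_nonneg_right hβc
            (Real.rpow_nonneg (div_nonneg hr.le s.coe_nonneg) p)]
      _ = c := by
          rw [mul_right_comm, ← Real.mul_rpow (by positivity) (by positivity),
            div_mul_div_cancel₀ hr.ne', div_self (by positivity), Real.one_rpow, one_mul]

theorem exists_mul_le_mul_rpow (hp : 1 < p) (K : ℝ) {ε : ℝ} (hε : 0 < ε) :
    ∃ R : ℝ, 1 ≤ R ∧ ∀ r, R ≤ r → K * r ≤ ε * r ^ p := by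
  obtain ⟨R, hR⟩ := eventually_atTop.1
    ((_root_.tendsto_rpow_atTop (sub_pos.2 hp)).eventually_ge_atTop (K / ε))
  refine ⟨max R 1, le_max_right _ _, fun r hr => ?_⟩
  have hr₀ : 0 < r := one_pos.trans_le ((le_max_right _ _).trans hr)
  calc K * r ≤ ε * r ^ (p - 1) * r := by
        gcongr
        exact (div_le_iff₀' hε).1 (hR r ((le_max_left _ _).trans hr))
    _ = ε * r ^ p := by rw [mul_assoc, ← Real.rpow_add_one hr₀.ne', sub_add_cancel]

theorem IsPenalty.exists_superlinear_growth (hp : 1 < p) (hφ : IsPenalty p φ) (K : ℝ) :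
    ∃ R ε : ℝ, 0 ≤ R ∧ 0 < ε ∧
      ∀ r c, R ≤ r → PenaltyLE φ r c → (K + ε) * r + ε * r ^ p ≤ c := by
  obtain ⟨α, β, hα, hβ, hgrowth⟩ := hφ.exists_rpow_growth (one_pos.trans hp)
  obtain ⟨R, hR₁, hR⟩ := exists_mul_le_mul_rpow hp (K + 1 + β) (half_pos hα)
  refine ⟨R, min (α / 2) 1, by linarith, by positivity, fun r c hr h => ?_⟩
  have hr₁ : 1 ≤ r := hR₁.trans hr
  calc (K + min (α / 2) 1) * r + min (α / 2) 1 * r ^ p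
      ≤ (K + 1) * r + α / 2 * r ^ p := by
        gcongr
        · exact min_le_right _ _
        · exact min_le_left _ _
    _ ≤ α * r ^ p - β := by nlinarith [hR r hr]
    _ ≤ c := hgrowth r c h

theorem phiStar_zero : phiStar φ 0 = 0 := by
  simp [phiStar]

theorem phiStar_ne_top (hp : 1 < p) (hφ : IsPenalty p φ) (y : ℝ≥0) : phiStar φ y ≠ ∞ := by
  obtain ⟨R, ε, -, hε, hgrowth⟩ := hφ.exists_superlinear_growth hp y
  refine ((iSup_le fun x => ?_ : phiStar φ y ≤ ENNReal.ofReal (R * y)).trans_lt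
    ENNReal.ofReal_lt_top).ne
  rw [tsub_le_iff_right]
  rcases le_total (x : ℝ) R with hxR | hRx
  · refine le_add_right ?_
    rw [← ENNReal.ofReal_coe_nnreal, NNReal.coe_mul]
    gcongr
  rcases eq_or_ne (φ x) ∞ with hx | hx
  · simp [hx]
  refine le_add_left ?_
  have hle := hgrowth x (φ x).toReal hRx
    ⟨x.coe_nonneg, ENNReal.toReal_nonneg, by rw [Real.toNNReal_coe, ENNReal.ofReal_toReal hx]⟩
  rw [← ENNReal.ofReal_toReal hx, ← ENNReal.ofReal_coe_nnreal, NNReal.coe_mul]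
  refine ENNReal.ofReal_le_ofReal ?_
  nlinarith [mul_nonneg hε.le x.coe_nonneg, mul_nonneg hε.le (Real.rpow_nonneg x.coe_nonneg p)]

theorem PenaltyLE.mul_sub_le_phiStar (hp : 1 < p) (hφ : IsPenalty p φ) (h : PenaltyLE φ r c)
    (y : ℝ≥0) : y * r - c ≤ (phiStar φ y).toReal := by
  have hsup : ((r.toNNReal * y : ℝ≥0) : ℝ≥0∞) - φ r.toNNReal ≤ phiStar φ y :=
    le_iSup (fun x : ℝ≥0 => ((x * y : ℝ≥0) : ℝ≥0∞) - φ x) _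
  have hle := (tsub_le_iff_right.1 hsup).trans (add_le_add_right h.le _)
  rw [← ENNReal.ofReal_toReal (phiStar_ne_top hp hφ y),
    ← ENNReal.ofReal_add ENNReal.toReal_nonneg h.cost_nonneg, ← ENNReal.ofReal_coe_nnreal,
    ENNReal.ofReal_le_ofReal_iff (add_nonneg ENNReal.toReal_nonneg h.cost_nonneg), NNReal.coe_mul,
    Real.coe_toNNReal r h.radius_nonneg] at hle
  linarith

theorem IsPenalty.exists_perturbed_conjugate_le (hp : 1 < p) (hφ : IsPenalty p φ) (y : ℝ≥0)
    {ζ : ℝ} (hζ : 0 < ζ) :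
    ∃ ε, 0 < ε ∧ ε ≤ ζ ∧ ∀ r c, PenaltyLE φ r c →
      (y + ε) * r + ε * r ^ p - c ≤ (phiStar φ y).toReal + ζ := by
  obtain ⟨R, ε₀, hR, hε₀, hgrowth⟩ := hφ.exists_superlinear_growth hp y
  set ε := min (min ε₀ ζ) (ζ / (R + R ^ p + 1))
  have hε : 0 < ε := by positivity
  refine ⟨ε, hε, (min_le_left _ _).trans (min_le_right _ _), fun r c h => ?_⟩
  have hr := h.radius_nonneg
  rcases le_total R r with hRr | hrR
  · have hεε₀ : ε ≤ ε₀ := (min_le_left _ _).trans (min_le_left _ _)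
    have hle : (y + ε) * r + ε * r ^ p ≤ (y + ε₀) * r + ε₀ * r ^ p := by gcongr
    have hnonneg : 0 ≤ (phiStar φ y).toReal := ENNReal.toReal_nonneg
    linarith [hgrowth r c hRr h]
  · have hslack : ε * (r + r ^ p) ≤ ζ := calc
      ε * (r + r ^ p) ≤ ζ / (R + R ^ p + 1) * (R + R ^ p + 1) := by
        have := Real.rpow_le_rpow hr hrR (one_pos.trans hp).le
        have hle : r + r ^ p ≤ R + R ^ p + 1 := by linarith
        gcongr
        exact min_le_right _ _
      _ = ζ := div_mul_cancel₀ _ (by positivity)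
    linarith [h.mul_sub_le_phiStar hp hφ y]

end Penalty

/-! ### Bounded uniformly continuous functions and monetary operators -/

section BoundedUniformlyContinuous

variable {E : Type*} [SeminormedAddCommGroup E] {f g : E → ℝ}

/-- Bounded uniformly continuous real functions, the domain of all operators below. -/
structure IsBUC (f : E → ℝ) : Prop where
  bounded : ∃ M, ∀ x, |f x| ≤ M
  uniformContinuous : UniformContinuous f

/-- `f` has the affine function `r ↦ ε + C * r` as a modulus of continuity. For bounded functions
such moduli with arbitrarily small `ε` encode uniform continuity, in a form that can be integrated
against a coupling. -/
def HasAffineModulus (f : E → ℝ) (ε C : ℝ) : Prop :=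
  ∀ a b, f b ≤ f a + ε + C * ‖b - a‖

theorem uniformContinuous_of_hasAffineModulus
    (h : ∀ ε > 0, ∃ C, 0 ≤ C ∧ HasAffineModulus f ε C) : UniformContinuous f := by
  rw [Metric.uniformContinuous_iff]
  intro ε hε
  obtain ⟨C, hC, hf⟩ := h (ε / 2) (half_pos hε)
  refine ⟨ε / 2 / (C + 1), by positivity, fun a b hab => ?_⟩
  rw [dist_eq_norm, lt_div_iff₀ (by positivity)] at hab
  have hab' := hf a b
  rw [norm_sub_rev] at hab'
  rw [Real.dist_eq, abs_lt]
  constructor <;> nlinarith [hf b a, norm_nonneg (a - b)]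

namespace IsBUC

protected theorem continuous (hf : IsBUC f) : Continuous f :=
  hf.uniformContinuous.continuous

theorem exists_hasAffineModulus (hf : IsBUC f) {ε : ℝ} (hε : 0 < ε) :
    ∃ C, 0 ≤ C ∧ HasAffineModulus f ε C := by
  obtain ⟨M, hM⟩ := hf.bounded
  obtain ⟨δ, hδ, hfδ⟩ := Metric.uniformContinuous_iff.1 hf.uniformContinuous ε hε
  have hM₀ : 0 ≤ M := (abs_nonneg _).trans (hM 0)
  refine ⟨2 * M / δ, by positivity, fun a b => ?_⟩
  rcases lt_or_ge ‖b - a‖ δ with hab | hab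
  · have hclose := hfδ (a := b) (b := a) (by rwa [dist_eq_norm])
    rw [Real.dist_eq, abs_lt] at hclose
    linarith [show 0 ≤ 2 * M / δ * ‖b - a‖ by positivity]
  · have hfar : 2 * M ≤ 2 * M / δ * ‖b - a‖ := by
      rw [div_mul_eq_mul_div, le_div_iff₀ hδ]
      gcongr
    linarith [abs_le.1 (hM a), abs_le.1 (hM b)]

theorem const (k : ℝ) : IsBUC fun _ : E => k :=
  ⟨⟨|k|, fun _ => le_rfl⟩, uniformContinuous_const⟩

theorem add (hf : IsBUC f) (hg : IsBUC g) : IsBUC fun x => f x + g x := by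
  obtain ⟨M, hM⟩ := hf.bounded
  obtain ⟨N, hN⟩ := hg.bounded
  exact ⟨⟨M + N, fun x => (abs_add_le _ _).trans (add_le_add (hM x) (hN x))⟩,
    hf.uniformContinuous.add hg.uniformContinuous⟩

theorem const_mul (hf : IsBUC f) (k : ℝ) : IsBUC fun x => k * f x := by
  obtain ⟨M, hM⟩ := hf.bounded
  exact ⟨⟨|k| * M, fun x => by rw [abs_mul]; gcongr; exact hM x⟩,
    hf.uniformContinuous.const_smul k⟩

theorem integrable_comp_add [MeasurableSpace E] [BorelSpace E] (hf : IsBUC f)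
    (m : Measure E) [IsFiniteMeasure m] (x : E) : Integrable (fun y => f (x + y)) m := by
  obtain ⟨M, hM⟩ := hf.bounded
  have hcont : Continuous fun y => f (x + y) := hf.continuous.comp (continuous_const_add x)
  exact .of_bound hcont.measurable.aestronglyMeasurable M (Eventually.of_forall fun y => hM _)

end IsBUC

theorem isBUC_min_one_norm_sub_div (x : E) {δ : ℝ} (hδ : 0 < δ) :
    IsBUC fun a => min 1 (‖a - x‖ / δ) := by
  refine ⟨⟨1, fun a => ?_⟩, ?_⟩
  · rw [abs_of_nonneg (by positivity)]
    exact min_le_left _ _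
  · simp only [div_eq_inv_mul]
    exact (LipschitzWith.id.const_min 1).uniformContinuous.comp
      ((uniformContinuous_norm.comp
        (uniformContinuous_id.sub uniformContinuous_const)).const_smul δ⁻¹)

end BoundedUniformlyContinuous

section C0

variable {d : ℕ} {f : Ed d → ℝ}

theorem isC0_coe (f : C₀(Ed d, ℝ)) : IsC0 (f : Ed d → ℝ) :=
  ⟨f.continuous, f.zero_at_infty'⟩

/-- The bundled `C₀` function of an `IsC0` predicate. -/
def IsC0.toC0 (hf : IsC0 f) : C₀(Ed d, ℝ) :=
  ⟨⟨f, hf.1⟩, hf.2⟩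

theorem IsC0.isBUC (hf : IsC0 f) : IsBUC f :=
  ⟨⟨‖hf.toC0.toBCF‖, hf.toC0.toBCF.norm_coe_le_norm⟩,
    ZeroAtInftyContinuousMap.uniformContinuous hf.toC0⟩

theorem isC0_integral_comp_add (hf : IsC0 f) (m : Measure (Ed d)) [IsFiniteMeasure m] :
    IsC0 fun x => ∫ y, f (x + y) ∂m := by
  obtain ⟨M, hM⟩ := hf.isBUC.bounded
  have hmeas (x : Ed d) : AEStronglyMeasurable (fun y => f (x + y)) m :=
    (hf.isBUC.integrable_comp_add m x).1
  have hbound (x : Ed d) : ∀ᵐ y ∂m, ‖f (x + y)‖ ≤ M := Eventually.of_forall fun y => hM _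
  constructor
  · have := hf.1
    exact continuous_of_dominated hmeas hbound (integrable_const M)
      (Eventually.of_forall fun y => by fun_prop)
  · have : (cocompact (Ed d)).IsCountablyGenerated := by
      rw [← Metric.cobounded_eq_cocompact, ← comap_norm_atTop]
      infer_instance
    rw [← integral_zero (Ed d) ℝ (μ := m)]
    exact tendsto_integral_filter_of_dominated_convergence (fun _ => M)
      (Eventually.of_forall hmeas) (Eventually.of_forall hbound) (integrable_const M)
      (Eventually.of_forall fun y =>
        hf.2.comp (Homeomorph.addRight y).isClosedEmbedding.tendsto_cocompact)

end C0

section Integral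

variable {Ω : Type*} [MeasurableSpace Ω] {m : Measure Ω} [IsProbabilityMeasure m] {f g : Ω → ℝ}

theorem integral_le_integral_add_const (hf : Integrable f m) (hg : Integrable g m) {k : ℝ}
    (hfg : ∀ ω, f ω ≤ g ω + k) : ∫ ω, f ω ∂m ≤ (∫ ω, g ω ∂m) + k := by
  have hle := integral_mono hf (hg.add (integrable_const k)) hfg
  rwa [integral_add' hg (integrable_const k), integral_const, probReal_univ, one_smul] at hle

theorem abs_integral_le_of_abs_le {M : ℝ} (hM : ∀ ω, |f ω| ≤ M) : |∫ ω, f ω ∂m| ≤ M := by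
  simpa using norm_integral_le_of_norm_le_const (f := f) (μ := m) (Eventually.of_forall hM)

end Integral

section Monetary

variable {E : Type*} [SeminormedAddCommGroup E] {T U : (E → ℝ) → E → ℝ} {f g : E → ℝ}

/-- A translation invariant monetary operator on bounded uniformly continuous functions: monotone,
commuting with translations and subadditive under constants, all combined in a single comparison
principle, and mapping `0` to `0`. -/
structure IsMonetaryOp (T : (E → ℝ) → E → ℝ) : Prop where
  comparison : ∀ {f g : E → ℝ} {x x' : E} {k : ℝ}, IsBUC f → IsBUC g →
    (∀ y, f (x' + y) ≤ g (x + y) + k) → T f x' ≤ T g x + k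
  map_zero : T (fun _ => 0) = fun _ => 0

namespace IsMonetaryOp

theorem le_add_const (hT : IsMonetaryOp T) (hf : IsBUC f) (hg : IsBUC g) {k : ℝ}
    (hfg : ∀ y, f y ≤ g y + k) (x : E) : T f x ≤ T g x + k :=
  hT.comparison hf hg fun _ => hfg _

theorem mono (hT : IsMonetaryOp T) (hf : IsBUC f) (hg : IsBUC g) (hfg : ∀ y, f y ≤ g y) (x : E) :
    T f x ≤ T g x := by
  simpa using hT.le_add_const hf hg (k := 0) (by simpa using hfg) x

theorem hasAffineModulus (hT : IsMonetaryOp T) (hf : IsBUC f) {ε C : ℝ}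
    (hmod : HasAffineModulus f ε C) : HasAffineModulus (T f) ε C := fun a b => by
  rw [add_assoc]
  refine hT.comparison hf hf fun y => ?_
  simpa only [add_sub_add_right_eq_sub, add_assoc] using hmod (a + y) (b + y)

theorem abs_le (hT : IsMonetaryOp T) (hf : IsBUC f) {M : ℝ} (hM : ∀ x, |f x| ≤ M) (x : E) :
    |T f x| ≤ M := by
  have hupper := hT.le_add_const hf (.const 0) (k := M)
    (fun y => by linarith [(_root_.abs_le.1 (hM y)).2]) x
  have hlower := hT.le_add_const (.const 0) hf (k := M)
    (fun y => by linarith [(_root_.abs_le.1 (hM y)).1]) x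
  rw [hT.map_zero] at hupper hlower
  exact _root_.abs_le.2 ⟨by linarith, by linarith⟩

theorem isBUC (hT : IsMonetaryOp T) (hf : IsBUC f) : IsBUC (T f) := by
  obtain ⟨M, hM⟩ := hf.bounded
  refine ⟨⟨M, hT.abs_le hf hM⟩, uniformContinuous_of_hasAffineModulus fun ε hε => ?_⟩
  obtain ⟨C, hC, hmod⟩ := hf.exists_hasAffineModulus hε
  exact ⟨C, hC, hT.hasAffineModulus hf hmod⟩

theorem comp (hT : IsMonetaryOp T) (hU : IsMonetaryOp U) : IsMonetaryOp fun f => T (U f) where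
  comparison hf hg hfg := hT.comparison (hU.isBUC hf) (hU.isBUC hg) fun y =>
    hU.comparison hf hg fun z => by simpa only [add_assoc] using hfg (y + z)
  map_zero := by rw [hU.map_zero, hT.map_zero]

theorem iterate (hT : IsMonetaryOp T) (n : ℕ) : IsMonetaryOp T^[n] := by
  induction n with
  | zero => exact ⟨fun _ _ hfg => by simpa using hfg 0, rfl⟩
  | succ n ih => exact ih.comp hT

theorem of_tendsto {ι : Type*} {l : Filter ι} [l.NeBot] {S : ι → (E → ℝ) → E → ℝ}
    (hS : ∀ i, IsMonetaryOp (S i))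
    (hT : ∀ f, IsBUC f → ∀ x, Tendsto (fun i => S i f x) l (𝓝 (T f x))) : IsMonetaryOp T where
  comparison hf hg hfg := le_of_tendsto_of_tendsto' (hT _ hf _) ((hT _ hg _).add_const _)
    fun i => (hS i).comparison hf hg hfg
  map_zero := funext fun x => tendsto_nhds_unique (hT _ (.const 0) x) <| by
    simp only [(hS _).map_zero, tendsto_const_nhds]

end IsMonetaryOp

end Monetary

/-! ### The one-step operator -/

section OneStep

variable {d : ℕ} {p : ℝ} {φ : ℝ≥0 → ℝ≥0∞} {m ν : Measure (Ed d)} {t c : ℝ} {f g : Ed d → ℝ}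

/-- `ν` competes in the supremum defining `Sop p φ m t`, at a penalty of at most `c`. -/
structure IsAdmissible (p : ℝ) (φ : ℝ≥0 → ℝ≥0∞) (m : Measure (Ed d)) (t : ℝ) (ν : Measure (Ed d))
    (c : ℝ) : Prop where
  memPp : MemPp p ν
  cost_nonneg : 0 ≤ c
  phit_le : phit φ t (Wp p m ν).toNNReal ≤ ENNReal.ofReal c

theorem isAdmissible_iff_penaltyLE (ht : 0 < t) :
    IsAdmissible p φ m t ν c ↔ MemPp p ν ∧ PenaltyLE φ (Wp p m ν / t) (c / t) := by
  constructor
  · rintro ⟨hν, hc, hle⟩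
    exact ⟨hν, div_nonneg wp_nonneg ht.le, div_nonneg hc ht.le,
      (phit_toNNReal_le_ofReal_iff ht).1 hle⟩
  · rintro ⟨hν, -, hc, hle⟩
    exact ⟨hν, by simpa [ht.ne'] using mul_nonneg hc ht.le, (phit_toNNReal_le_ofReal_iff ht).2 hle⟩

theorem isAdmissible_self (hp : 0 < p) (hφ : IsPenalty p φ) (hm : MemPp p m) :
    IsAdmissible p φ m t m 0 := by
  have := hm.1
  refine ⟨hm, le_rfl, ?_⟩
  rw [wp_self hp, Real.toNNReal_zero, phit]
  by_cases ht : 0 < t <;> simp [ht, hφ.map_zero]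

theorem sop_le (hp : 0 < p) (hφ : IsPenalty p φ) (hm : MemPp p m) {x : Ed d} {A : ℝ}
    (h : ∀ ν c, IsAdmissible p φ m t ν c → (∫ y, f (x + y) ∂ν) - c ≤ A) : Sop p φ m t f x ≤ A := by
  obtain ⟨hmem, hc, hle⟩ := isAdmissible_self (t := t) hp hφ hm
  refine csSup_le ⟨_, m, hmem, 0, hc, hle, rfl⟩ ?_
  rintro r ⟨ν, hν, c, hc, hle, rfl⟩
  exact h ν c ⟨hν, hc, hle⟩

theorem IsAdmissible.le_sop (h : IsAdmissible p φ m t ν c) (hf : IsBUC f) (x : Ed d) :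
    (∫ y, f (x + y) ∂ν) - c ≤ Sop p φ m t f x := by
  obtain ⟨M, hM⟩ := hf.bounded
  refine le_csSup ⟨M, ?_⟩ ⟨ν, h.memPp, c, h.cost_nonneg, h.phit_le, rfl⟩
  rintro r ⟨ν, hν, c, hc, -, rfl⟩
  have := hν.1
  linarith [(abs_le.1 (abs_integral_le_of_abs_le (m := ν) fun y => hM (x + y))).2]

theorem exists_isAdmissible_sop_lt (hp : 0 < p) (hφ : IsPenalty p φ) (hm : MemPp p m)
    (f : Ed d → ℝ) (x : Ed d) {ε : ℝ} (hε : 0 < ε) :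
    ∃ ν c, IsAdmissible p φ m t ν c ∧ Sop p φ m t f x < (∫ y, f (x + y) ∂ν) - c + ε := by
  by_contra! hcon
  have hle : Sop p φ m t f x ≤ Sop p φ m t f x - ε :=
    sop_le hp hφ hm fun ν c h => by linarith [hcon ν c h]
  linarith

theorem isMonetaryOp_sop (hp : 0 < p) (hφ : IsPenalty p φ) (hm : MemPp p m) :
    IsMonetaryOp (Sop p φ m t) where
  comparison {f g x x' k} hf hg hfg := sop_le hp hφ hm fun ν c h => by
    have := h.memPp.1
    have hle := integral_le_integral_add_const (hf.integrable_comp_add ν x')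
      (hg.integrable_comp_add ν x) hfg
    linarith [h.le_sop hg x]
  map_zero := funext fun x => by
    refine le_antisymm (sop_le hp hφ hm fun ν c h => ?_) ?_
    · simpa using h.cost_nonneg
    · simpa using (isAdmissible_self hp hφ hm).le_sop (.const 0) x

theorem integral_le_sop (hp : 0 < p) (hφ : IsPenalty p φ) (hm : MemPp p m) (hf : IsBUC f)
    (x : Ed d) : ∫ y, f (x + y) ∂m ≤ Sop p φ m t f x := by
  simpa using (isAdmissible_self hp hφ hm).le_sop hf x

theorem IsAdmissible.wp_eq_zero (h : IsAdmissible p φ m 0 ν c) : Wp p m ν = 0 := by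
  have hle := h.phit_le
  by_contra hne
  have hpos : ¬ (Wp p m ν).toNNReal = 0 := by
    simpa using lt_of_le_of_ne wp_nonneg (Ne.symm hne)
  simp [phit, hpos] at hle

theorem sop_dirac_zero (hp : 1 ≤ p) (hφ : IsPenalty p φ) (hf : IsBUC f) :
    Sop p φ (Measure.dirac 0) 0 f = f := by
  have hp₀ : 0 < p := one_pos.trans_le hp
  have hδ : MemPp p (Measure.dirac (0 : Ed d)) := memPp_dirac hp₀ 0
  funext x
  refine le_antisymm (sop_le hp₀ hφ hδ fun ν c h => le_of_forall_pos_le_add fun ε hε => ?_) ?_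
  · obtain ⟨C, hC, hmod⟩ := hf.exists_hasAffineModulus hε
    have := h.memPp.1
    have hle := integral_le_integral_add_wp hp hδ h.memPp hC le_rfl (hf.integrable_comp_add ν x)
      ((hf.add (.const ε)).integrable_comp_add _ x) fun a b => by
        simpa using hmod (x + a) (x + b)
    rw [h.wp_eq_zero] at hle
    simp only [integral_dirac, add_zero, mul_zero, zero_mul] at hle
    linarith [h.cost_nonneg]
  · simpa using integral_le_sop (t := 0) hp₀ hφ hδ hf x

theorem integral_comp_add_smul_sub_le_sop (hp : 0 < p) (hφ : IsPenalty p φ) (hm : MemPp p m)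
    (ht : 0 < t) (hf : IsBUC f) {b : Ed d} (hb : PenaltyLE φ ‖b‖ c) (x : Ed d) :
    ∫ y, f (x + t • b + y) ∂m - t * c ≤ Sop p φ m t f x := by
  have := hm.1
  have hshift : IsAdmissible p φ m t (m.map (· + t • b)) (t * c) := by
    refine (isAdmissible_iff_penaltyLE ht).2 ⟨hm.map_add_right hp _, ?_⟩
    rw [mul_div_cancel_left₀ _ ht.ne']
    refine hb.mono hφ (div_nonneg wp_nonneg ht.le) ((div_le_iff₀' ht).2 ?_)
    simpa [norm_smul, abs_of_pos ht] using wp_map_add_right_le (μ := m) hp (t • b)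
  have hle := hshift.le_sop hf x
  have hcont : Continuous fun z => f (x + z) := hf.continuous.comp (continuous_const_add x)
  rw [integral_map (measurable_add_const _).aemeasurable hcont.aestronglyMeasurable] at hle
  simpa only [add_assoc, add_comm, add_left_comm] using hle

theorem sop_le_of_growth (hp : 1 ≤ p) (hφ : IsPenalty p φ) (hm : MemPp p m) (ht : 0 < t)
    (hf : IsBUC f) (hg : IsBUC g) {C D Φ : ℝ} (hC : 0 ≤ C) (hD : 0 ≤ D)
    (hΦ : ∀ r k, PenaltyLE φ r k → C * r + D * r ^ p - k ≤ Φ)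
    (hfg : ∀ a b, f b ≤ g a + C * ‖b - a‖ + D * (t * (‖b - a‖ / t) ^ p)) (x : Ed d) :
    Sop p φ m t f x ≤ (∫ y, g (x + y) ∂m) + t * Φ := by
  have hscale (r : ℝ) (hr : 0 ≤ r) : D * (t * (r / t) ^ p) = D * t / t ^ p * r ^ p := by
    rw [Real.div_rpow hr ht.le]
    ring
  refine sop_le (one_pos.trans_le hp) hφ hm fun ν c h => ?_
  have := hm.1
  have := h.memPp.1
  have hdual := integral_le_integral_add_wp hp hm h.memPp hC
    (show 0 ≤ D * t / t ^ p by positivity) (hf.integrable_comp_add ν x)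
    (hg.integrable_comp_add m x) fun a b => by
      rw [← hscale _ (norm_nonneg _)]
      simpa using hfg (x + a) (x + b)
  rw [← hscale _ wp_nonneg] at hdual
  have hpen := mul_le_mul_of_nonneg_left (hΦ _ _ ((isAdmissible_iff_penaltyLE ht).1 h).2) ht.le
  have hexpand : t * (C * (Wp p m ν / t) + D * (Wp p m ν / t) ^ p - c / t) =
      C * Wp p m ν + D * (t * (Wp p m ν / t) ^ p) - c := by
    field_simp
  linarith

end OneStep

section VanishingAtInfinity

variable {d : ℕ} {f : Ed d → ℝ}

theorem isC0_max_zero_sub_mul_norm {C : ℝ} (hC : 0 < C) (A : ℝ) :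
    IsC0 fun a : Ed d => max 0 (A - C * ‖a‖) := by
  refine ⟨by fun_prop, tendsto_const_nhds.congr' ?_⟩
  rw [← Metric.cobounded_eq_cocompact]
  filter_upwards [tendsto_norm_cobounded_atTop.eventually_ge_atTop (A / C)] with a ha
  rw [div_le_iff₀' hC] at ha
  exact (max_eq_left (by linarith)).symm

theorem IsC0.exists_isC0_majorant (hf : IsC0 f) {ε C : ℝ} (hε : 0 < ε) (hC : 0 < C) :
    ∃ g : Ed d → ℝ, IsC0 g ∧ ∀ a b, f b ≤ g a + ε + C * ‖b - a‖ := by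
  obtain ⟨M, hM⟩ := hf.isBUC.bounded
  obtain ⟨R, hR⟩ : ∃ R, ∀ x, R ≤ ‖x‖ → f x ≤ ε := by
    have hsmall := hf.2.eventually_le_const hε
    rw [← Metric.cobounded_eq_cocompact, ← comap_norm_atTop, eventually_comap] at hsmall
    obtain ⟨R, hR⟩ := eventually_atTop.1 hsmall
    exact ⟨R, fun x hx => hR _ hx x rfl⟩
  refine ⟨_, isC0_max_zero_sub_mul_norm hC (M + C * R), fun a b => ?_⟩
  have hnonneg : 0 ≤ C * ‖b - a‖ := by positivity
  rcases le_total R ‖b‖ with hb | hb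
  · linarith [hR b hb, le_max_left 0 (M + C * R - C * ‖a‖)]
  · have htri : ‖a‖ ≤ R + ‖b - a‖ := by
      have : ‖a‖ ≤ ‖b‖ + ‖b - a‖ := by simpa using norm_sub_le b (b - a)
      linarith
    have hM' := (abs_le.1 (hM b)).2
    nlinarith [le_max_right 0 (M + C * R - C * ‖a‖), mul_le_mul_of_nonneg_left htri hC.le]

theorem isC0_sop {p : ℝ} {φ : ℝ≥0 → ℝ≥0∞} {m : Measure (Ed d)} {t : ℝ} (hp : 1 < p)
    (hφ : IsPenalty p φ) (hm : MemPp p m) (ht : 0 < t) (hf : IsC0 f) :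
    IsC0 (Sop p φ m t f) := by
  have hp₀ : 0 < p := one_pos.trans hp
  have := hm.1
  refine ⟨((isMonetaryOp_sop hp₀ hφ hm).isBUC hf.isBUC).continuous, ?_⟩
  refine tendsto_order.2 ⟨fun a ha => ?_, fun a ha => ?_⟩
  · filter_upwards [(isC0_integral_comp_add hf m).2.eventually_const_lt ha] with x hx
    exact hx.trans_le (integral_le_sop hp₀ hφ hm hf.isBUC x)
  obtain ⟨C, hC, -, hconj⟩ := hφ.exists_perturbed_conjugate_le hp 0 (ζ := a / 4 / t) (by positivity)
  simp only [phiStar_zero, NNReal.coe_zero, zero_add, ENNReal.toReal_zero] at hconj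
  obtain ⟨g, hg, hfg⟩ := hf.exists_isC0_majorant (ε := a / 4) (by positivity) hC
  filter_upwards [(isC0_integral_comp_add hg m).2.eventually_lt_const (half_pos ha)] with x hx
  have hle := sop_le_of_growth hp.le hφ hm ht hf.isBUC (hg.isBUC.add (.const (a / 4))) hC.le hC.le
    hconj (fun b y => (hfg b y).trans (le_add_of_nonneg_right (by positivity))) x
  rw [integral_add (hg.isBUC.integrable_comp_add m x) (integrable_const _), integral_const,
    probReal_univ, one_smul, mul_div_cancel₀ _ ht.ne'] at hle
  linarith

end VanishingAtInfinity

/-! ### Gluing competitors -/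

section Gluing

open ProbabilityTheory

/-- The law of `y + z`, where `y` has law `ν` and `z` has law `K y` given `y`. -/
def glue {G : Type*} [MeasurableSpace G] [Add G] (ν : Measure G) (K : Kernel G G) : Measure G :=
  (ν ⊗ₘ K).map fun q => q.1 + q.2

/-- A simple function with values in the measures, regarded as a kernel. -/
def simpleKernel {α β : Type*} [MeasurableSpace α] [MeasurableSpace β]
    (N : SimpleFunc α (Measure β)) : Kernel α β :=
  ⟨N, N.measurable⟩

theorem conv_eq_glue_const {G : Type*} [MeasurableSpace G] [AddMonoid G] (μ ν : Measure G)
    [SFinite μ] [SFinite ν] : μ.conv ν = glue μ (Kernel.const G ν) := by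
  rw [glue, Measure.compProd_const, Measure.conv]

theorem map_glue {G H : Type*} [MeasurableSpace G] [AddMonoid G] [MeasurableAdd₂ G]
    [MeasurableSpace H] [AddMonoid H] [MeasurableAdd₂ H] {γ : Measure G} [SFinite γ]
    {κ : Kernel G G} [IsSFiniteKernel κ] {K : Kernel H H} [IsSFiniteKernel K] (π : G →+ H)
    (hπ : Measurable π) (hκ : ∀ q, (κ q).map π = K (π q)) :
    (glue γ κ).map π = glue (γ.map π) K := by
  have hG : Measurable fun q : G × G => q.1 + q.2 := by fun_prop
  have hH : Measurable fun q : H × H => q.1 + q.2 := by fun_prop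
  ext B hB
  rw [glue, glue, Measure.map_map hπ hG, Measure.map_apply (hπ.comp hG) hB,
    Measure.compProd_apply ((hπ.comp hG) hB), Measure.map_apply hH hB,
    Measure.compProd_apply (hH hB),
    lintegral_map (Kernel.measurable_kernel_prodMk_left (hH hB)) hπ]
  refine lintegral_congr fun q => ?_
  rw [← hκ, Measure.map_apply hπ (measurable_prodMk_left (hH hB))]
  congr 1
  ext z
  simp

theorem eLpNorm_compProd_snd_le {α β E : Type*} [MeasurableSpace α] [MeasurableSpace β]
    [NormedAddCommGroup E] [MeasurableSpace E] [BorelSpace E] {p : ℝ} (hp : 0 < p) {γ : Measure α}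
    [SFinite γ] {κ : Kernel α β} [IsSFiniteKernel κ] {g : β → E} (hg : Measurable g) {W : α → ℝ}
    (hgW : ∀ a, eLpNorm g (ENNReal.ofReal p) (κ a) ≤ ENNReal.ofReal (W a)) :
    eLpNorm (fun q : α × β => g q.2) (ENNReal.ofReal p) (γ ⊗ₘ κ) ≤
      eLpNorm W (ENNReal.ofReal p) γ := by
  simp only [← lintegral_rpow_nnnorm_eq_eLpNorm hp] at hgW ⊢
  rw [Measure.lintegral_compProd (by fun_prop)]
  gcongr with a
  rw [← ENNReal.rpow_inv_le_iff hp, ← one_div]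
  exact (hgW a).trans
    ((ENNReal.ofReal_le_ofReal (le_abs_self _)).trans_eq (Real.enorm_eq_ofReal_abs _).symm)

variable {d : ℕ} {p : ℝ} {φ : ℝ≥0 → ℝ≥0∞} {m₁ m₂ ν : Measure (Ed d)}
  {N : SimpleFunc (Ed d) (Measure (Ed d))}

theorem isMarkovKernel_simpleKernel (hN : ∀ y, MemPp p (N y)) :
    IsMarkovKernel (simpleKernel N) :=
  ⟨fun y => (hN y).1⟩

theorem memPp_glue (hp : 0 < p) (hν : MemPp p ν) (hN : ∀ y, MemPp p (N y)) :
    MemPp p (glue ν (simpleKernel N)) := by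
  have := hν.1
  have := isMarkovKernel_simpleKernel hN
  refine (memPp_map_iff hp (by fun_prop)).2 (MemLp.add (f := Prod.fst) (g := Prod.snd) ?_ ?_)
  · have hid := ((memPp_iff_memLp hp).1 hν).2
    rw [← Measure.fst_compProd ν (simpleKernel N)] at hid
    exact hid.comp_of_map measurable_fst.aemeasurable
  · let moment := N.map fun ρ => (eLpNorm id (ENNReal.ofReal p) ρ).toReal
    refine ⟨measurable_snd.aestronglyMeasurable, (eLpNorm_compProd_snd_le hp measurable_id
      (W := moment) fun y => ?_).trans_lt (moment.memLp_of_isFiniteMeasure _ ν).2⟩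
    exact (ENNReal.ofReal_toReal ((memPp_iff_memLp hp).1 (hN y)).2.2.ne).ge

theorem transportCost_glue_le (hp : 1 ≤ p) {γ : Measure (Ed d × Ed d)} [IsProbabilityMeasure γ]
    {κ : Kernel (Ed d × Ed d) (Ed d × Ed d)} [IsMarkovKernel κ] {W : Ed d × Ed d → ℝ}
    (hW : ∀ q, transportCost p (κ q) ≤ ENNReal.ofReal (W q)) :
    transportCost p (glue γ κ) ≤ transportCost p γ + eLpNorm W (ENNReal.ofReal p) γ := by
  have hsplit : (fun q : Ed d × Ed d => q.2 - q.1) ∘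
      (fun q : (Ed d × Ed d) × (Ed d × Ed d) => q.1 + q.2) =
      (fun q => q.1.2 - q.1.1) + fun q => q.2.2 - q.2.1 :=
    funext fun q => add_sub_add_comm _ _ _ _
  have hfst : transportCost p γ = eLpNorm (fun q : (Ed d × Ed d) × (Ed d × Ed d) =>
      q.1.2 - q.1.1) (ENNReal.ofReal p) (γ ⊗ₘ κ) := by
    conv_lhs => rw [← Measure.fst_compProd γ κ]
    rw [transportCost, Measure.fst, eLpNorm_map_measure (by fun_prop) (by fun_prop)]
    rfl
  rw [transportCost, glue, eLpNorm_map_measure (by fun_prop) (by fun_prop), hsplit, hfst]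
  refine (eLpNorm_add_le (by fun_prop) (by fun_prop) (ENNReal.one_le_ofReal.2 hp)).trans ?_
  gcongr
  exact eLpNorm_compProd_snd_le (one_pos.trans_le hp) (g := fun q : Ed d × Ed d => q.2 - q.1)
    (by fun_prop) hW

theorem eLpNorm_simpleFunc_add_const_le {α : Type*} [MeasurableSpace α] {m : Measure α}
    [IsProbabilityMeasure m] (hp : 1 ≤ p) (w : SimpleFunc α ℝ) (hw : ∀ y, 0 ≤ w y) {η : ℝ}
    (hη : 0 ≤ η) : eLpNorm (fun y => w y + η) (ENNReal.ofReal p) m ≤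
      ENNReal.ofReal ((∫ y, w y ^ p ∂m) ^ (1 / p) + η) := by
  have hp₀ : 0 < p := one_pos.trans_le hp
  have hne : ENNReal.ofReal p ≠ 0 := (ENNReal.ofReal_pos.2 hp₀).ne'
  have hw_memLp : MemLp w (ENNReal.ofReal p) m := w.memLp_of_isFiniteMeasure _ _
  refine (eLpNorm_add_le hw_memLp.1 aestronglyMeasurable_const
    (ENNReal.one_le_ofReal.2 hp)).trans_eq ?_
  have hint : 0 ≤ ∫ y, w y ^ p ∂m := integral_nonneg fun y => Real.rpow_nonneg (hw y) _
  rw [ENNReal.ofReal_add (by positivity) hη, eLpNorm_const _ hne (NeZero.ne _),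
    hw_memLp.eLpNorm_eq_integral_rpow_norm hne ENNReal.ofReal_ne_top, ENNReal.toReal_ofReal hp₀.le]
  simp only [Real.norm_of_nonneg (hw _), one_div, measure_univ, ENNReal.one_rpow, mul_one,
    Real.enorm_of_nonneg hη]

theorem IsCoupling.glue [IsProbabilityMeasure m₁] [IsProbabilityMeasure m₂]
    {γ : Measure (Ed d × Ed d)} {κ : Kernel (Ed d × Ed d) (Ed d × Ed d)} [IsMarkovKernel κ]
    {K : Kernel (Ed d) (Ed d)} [IsMarkovKernel K] (hγ : IsCoupling γ m₁ ν)
    (hκ : ∀ q, IsCoupling (κ q) m₂ (K q.2)) :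
    IsCoupling (glue γ κ) (m₁.conv m₂) (glue ν K) := by
  have := hγ.isProbabilityMeasure
  rw [conv_eq_glue_const, ← hγ.1, ← hγ.2]
  exact ⟨map_glue (AddMonoidHom.fst (Ed d) (Ed d)) measurable_fst fun q => (hκ q).1,
    map_glue (AddMonoidHom.snd (Ed d) (Ed d)) measurable_snd fun q => (hκ q).2⟩

theorem wp_conv_glue_le (hp : 1 ≤ p) (hm₁ : MemPp p m₁) (hm₂ : MemPp p m₂) (hν : MemPp p ν)
    (hN : ∀ y, MemPp p (N y)) : Wp p (m₁.conv m₂) (glue ν (simpleKernel N)) ≤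
      Wp p m₁ ν + (∫ y, Wp p m₂ (N y) ^ p ∂ν) ^ (1 / p) := by
  have hp₀ : 0 < p := one_pos.trans_le hp
  have := hm₁.1
  have := hm₂.1
  have := hν.1
  refine le_of_forall_pos_le_add fun η hη => ?_
  obtain ⟨γ, hγ, hγ_cost⟩ := exists_isCoupling_transportCost_lt hp₀ hm₁ hν
    (lt_add_of_pos_right _ (half_pos hη))
  choose! g hg hg_cost using fun ρ (hρ : MemPp p ρ) =>
    exists_isCoupling_transportCost_lt hp₀ hm₂ hρ (lt_add_of_pos_right _ (half_pos hη))
  let κ : Kernel (Ed d × Ed d) (Ed d × Ed d) :=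
    simpleKernel ((N.map g).comp Prod.snd measurable_snd)
  have := hγ.isProbabilityMeasure
  have hκ (q : Ed d × Ed d) : IsCoupling (κ q) m₂ (simpleKernel N q.2) := hg _ (hN q.2)
  have : IsMarkovKernel κ := ⟨fun q => (hκ q).isProbabilityMeasure⟩
  have := isMarkovKernel_simpleKernel hN
  let w : SimpleFunc (Ed d) ℝ := N.map (Wp p m₂)
  have hw (y : Ed d) : 0 ≤ w y := wp_nonneg
  have hκ_cost (q : Ed d × Ed d) : transportCost p (κ q) ≤ ENNReal.ofReal (w q.2 + η / 2) :=
    (hg_cost _ (hN q.2)).le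
  have hint : 0 ≤ ∫ y, w y ^ p ∂ν := integral_nonneg fun y => Real.rpow_nonneg (hw y) _
  have hw_norm : eLpNorm (fun q : Ed d × Ed d => w q.2 + η / 2) (ENNReal.ofReal p) γ ≤
      ENNReal.ofReal ((∫ y, w y ^ p ∂ν) ^ (1 / p) + η / 2) := by
    have hle := eLpNorm_simpleFunc_add_const_le (m := ν) hp w hw (half_pos hη).le
    conv_lhs at hle => rw [← hγ.2]
    rwa [eLpNorm_map_measure (by fun_prop) measurable_snd.aemeasurable] at hle
  have hcost : transportCost p (glue γ κ) ≤
      ENNReal.ofReal (Wp p m₁ ν + η / 2 + ((∫ y, w y ^ p ∂ν) ^ (1 / p) + η / 2)) := by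
    rw [ENNReal.ofReal_add (add_nonneg wp_nonneg (half_pos hη).le) (by positivity)]
    exact (transportCost_glue_le hp hκ_cost).trans (add_le_add hγ_cost.le hw_norm)
  have hle := wp_le_of_isCoupling hp₀ (hγ.glue hκ)
    (add_nonneg (add_nonneg wp_nonneg (half_pos hη).le) (by positivity)) hcost
  exact hle.trans_eq (by simp only [w, SimpleFunc.map_apply]; ring)

theorem IsAdmissible.glue (hp : 1 ≤ p) (hφ : IsPenalty p φ) (hm₁ : MemPp p m₁) (hm₂ : MemPp p m₂)
    {s t k : ℝ} (hs : 0 < s) (ht : 0 < t) (hν : IsAdmissible p φ m₁ s ν k) {c : SimpleFunc (Ed d) ℝ}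
    (hN : ∀ y, IsAdmissible p φ m₂ t (N y) (c y)) :
    IsAdmissible p φ (m₁.conv m₂) (s + t) (glue ν (simpleKernel N)) (k + ∫ y, c y ∂ν) := by
  have hp₀ : 0 < p := one_pos.trans_le hp
  have := hν.memPp.1
  have hN_memPp (y : Ed d) : MemPp p (N y) := (hN y).memPp
  refine (isAdmissible_iff_penaltyLE (add_pos hs ht)).2 ⟨memPp_glue hp₀ hν.memPp hN_memPp, ?_⟩
  have hjensen : PenaltyLE φ ((∫ y, Wp p m₂ (N y) ^ p ∂ν) ^ (1 / p) / t) ((∫ y, c y ∂ν) / t) := by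
    have hJ := penaltyLE_integral hp₀ hφ (m := ν)
      (fun y => ((isAdmissible_iff_penaltyLE ht).1 (hN y)).2)
      (SimpleFunc.integrable_of_isFiniteMeasure (N.map fun ρ => (Wp p m₂ ρ / t) ^ p))
      (SimpleFunc.integrable_of_isFiniteMeasure (c.map fun r => r / t))
    have hint : 0 ≤ ∫ y, Wp p m₂ (N y) ^ p ∂ν :=
      integral_nonneg fun y => Real.rpow_nonneg wp_nonneg _
    simpa only [Real.div_rpow wp_nonneg ht.le, integral_div, Real.div_rpow hint
      (Real.rpow_nonneg ht.le p), one_div, Real.rpow_rpow_inv ht.le hp₀.ne'] using hJ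
  have hconvex := ((isAdmissible_iff_penaltyLE hs).1 hν).2.convex_combination hφ hjensen
    (a := s / (s + t)) (b := t / (s + t)) (by positivity) (by positivity) (by field_simp)
  have hcost : s / (s + t) * (k / s) + t / (s + t) * ((∫ y, c y ∂ν) / t) =
      (k + ∫ y, c y ∂ν) / (s + t) := by field_simp
  rw [hcost] at hconvex
  refine hconvex.mono hφ (div_nonneg wp_nonneg (add_pos hs ht).le) ?_
  calc _ ≤ (Wp p m₁ ν + (∫ y, Wp p m₂ (N y) ^ p ∂ν) ^ (1 / p)) / (s + t) := by
        gcongr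
        exact wp_conv_glue_le hp hm₁ hm₂ hν.memPp hN_memPp
    _ = _ := by field_simp

end Gluing

/-! ### Composing one-step operators -/

section Composition

open ProbabilityTheory

variable {d : ℕ} {p : ℝ} {φ : ℝ≥0 → ℝ≥0∞} {m m₁ m₂ ν : Measure (Ed d)} {t : ℝ} {f : Ed d → ℝ}

theorem IsBUC.integrable_comp_add_add (hf : IsBUC f) [IsFiniteMeasure ν] (K : Kernel (Ed d) (Ed d))
    [IsMarkovKernel K] (x : Ed d) :
    Integrable (fun q : Ed d × Ed d => f (x + q.1 + q.2)) (ν ⊗ₘ K) := by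
  obtain ⟨M, hM⟩ := hf.bounded
  have hcont := hf.continuous
  exact .of_bound (C := M) (by fun_prop) (Eventually.of_forall fun q => hM _)

theorem integral_glue (hf : IsBUC f) [IsFiniteMeasure ν] (K : Kernel (Ed d) (Ed d))
    [IsMarkovKernel K] (x : Ed d) :
    ∫ y, f (x + y) ∂(glue ν K) = ∫ y, ∫ z, f (x + y + z) ∂(K y) ∂ν := by
  have hcont := hf.continuous
  rw [glue, integral_map (by fun_prop) (by fun_prop)]
  simp only [← add_assoc]
  exact Measure.integral_compProd (hf.integrable_comp_add_add K x)

theorem exists_simpleFunc_integral_min_lt {E : Type*} [NormedAddCommGroup E]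
    [SecondCountableTopology E] [MeasurableSpace E] [BorelSpace E] (m : Measure E)
    [IsFiniteMeasure m] {C B ε : ℝ} (hC : 0 ≤ C) (hB : 0 ≤ B) (hε : 0 < ε) :
    ∃ Y : SimpleFunc E E, ∫ y, min (C * ‖y - Y y‖) B ∂m < ε := by
  let Y := SimpleFunc.nearestPt (TopologicalSpace.denseSeq E)
  have hmeas (n : ℕ) : Measurable fun y => min (C * ‖y - Y n y‖) B := by
    have := (Y n).measurable
    fun_prop
  have hbound (n : ℕ) (y : E) : ‖min (C * ‖y - Y n y‖) B‖ ≤ B := by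
    rw [Real.norm_of_nonneg (by positivity)]
    exact min_le_right _ _
  have hpointwise (y : E) : Tendsto (fun n => min (C * ‖y - Y n y‖) B) atTop (𝓝 0) := by
    have hY : Tendsto (fun n => Y n y) atTop (𝓝 y) :=
      SimpleFunc.tendsto_nearestPt (TopologicalSpace.denseRange_denseSeq E y)
    simpa [hB] using (((tendsto_const_nhds (x := y)).sub hY).norm.const_mul C).min
      (tendsto_const_nhds (x := B))
  have hlim := tendsto_integral_of_dominated_convergence (μ := m) (fun _ => B)
    (fun n => (hmeas n).aestronglyMeasurable) (integrable_const _)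
    (fun n => Eventually.of_forall (hbound n)) (Eventually.of_forall hpointwise)
  rw [integral_zero] at hlim
  obtain ⟨n, hn⟩ := (hlim.eventually_lt_const hε).exists
  exact ⟨Y n, hn⟩

theorem HasAffineModulus.abs_sub_le_min {ε C M : ℝ} (h : HasAffineModulus f ε C)
    (hM : ∀ x, |f x| ≤ M) (hε : 0 ≤ ε) (a b : Ed d) :
    |f b - f a| ≤ ε + min (C * ‖b - a‖) (2 * M) := by
  have ha := abs_le.1 (hM a)
  have hb := abs_le.1 (hM b)
  have hab := h a b
  have hba := h b a
  rw [norm_sub_rev] at hba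
  rw [← min_add_add_left, le_min_iff, abs_le, abs_le]
  exact ⟨⟨by linarith, by linarith⟩, by linarith, by linarith⟩

theorem IsBUC.exists_simpleFunc_abs_sub_le (hf : IsBUC f) (ν : Measure (Ed d))
    [IsProbabilityMeasure ν] {ε : ℝ} (hε : 0 < ε) :
    ∃ (Y : SimpleFunc (Ed d) (Ed d)) (k : Ed d → ℝ), Integrable k ν ∧ ∫ y, k y ∂ν ≤ ε ∧
      ∀ y z, |f (y + z) - f (Y y + z)| ≤ k y := by
  obtain ⟨M, hM⟩ := hf.bounded
  have hM₀ : 0 ≤ M := (abs_nonneg _).trans (hM 0)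
  obtain ⟨C, hC, hmod⟩ := hf.exists_hasAffineModulus (half_pos hε)
  obtain ⟨Y, hY⟩ := exists_simpleFunc_integral_min_lt ν hC (B := 2 * M) (by positivity)
    (half_pos hε)
  have hmin : Integrable (fun y => min (C * ‖y - Y y‖) (2 * M)) ν := by
    have := Y.measurable
    refine .of_bound (C := 2 * M) (by fun_prop) (Eventually.of_forall fun y => ?_)
    rw [Real.norm_of_nonneg (by positivity)]
    exact min_le_right _ _
  refine ⟨Y, fun y => ε / 2 + min (C * ‖y - Y y‖) (2 * M), (integrable_const _).add hmin, ?_,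
    fun y z => by simpa using hmod.abs_sub_le_min hM (half_pos hε).le (Y y + z) (y + z)⟩
  rw [integral_add (integrable_const _) hmin, integral_const, probReal_univ, one_smul]
  linarith

theorem sop_le_integral_sub_add (hp : 0 < p) (hφ : IsPenalty p φ) (hm : MemPp p m) (hf : IsBUC f)
    [IsProbabilityMeasure ν] {x x' : Ed d} {c k ε : ℝ} (hk : ∀ y, |f (x + y) - f (x' + y)| ≤ k)
    (hν : Sop p φ m t f x' ≤ (∫ y, f (x' + y) ∂ν) - c + ε) :
    Sop p φ m t f x ≤ (∫ y, f (x + y) ∂ν) - c + (2 * k + ε) := by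
  have hsop := (isMonetaryOp_sop (t := t) hp hφ hm).comparison hf hf (x := x') (x' := x) (k := k)
    fun y => by linarith [(abs_le.1 (hk y)).2]
  have hint := integral_le_integral_add_const (hf.integrable_comp_add ν x')
    (hf.integrable_comp_add ν x) (k := k) fun y => by linarith [(abs_le.1 (hk y)).1]
  linarith

theorem exists_simpleFunc_isAdmissible (hp : 0 < p) (hφ : IsPenalty p φ) (hm : MemPp p m)
    (hf : IsBUC f) [IsProbabilityMeasure ν] (x : Ed d) {ε : ℝ} (hε : 0 < ε) :
    ∃ (N : SimpleFunc (Ed d) (Measure (Ed d))) (c : SimpleFunc (Ed d) ℝ),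
      (∀ y, IsAdmissible p φ m t (N y) (c y)) ∧ ∫ y, Sop p φ m t f (x + y) ∂ν ≤
        (∫ y, f (x + y) ∂(glue ν (simpleKernel N))) - (∫ y, c y ∂ν) + ε := by
  obtain ⟨Y, k, hk, hk_le, hYk⟩ := hf.exists_simpleFunc_abs_sub_le ν (ε := ε / 4) (by positivity)
  choose N c hadm hN using fun e =>
    exists_isAdmissible_sop_lt (t := t) hp hφ hm f (x + e) (half_pos hε)
  refine ⟨Y.map N, Y.map c, fun y => hadm (Y y), ?_⟩
  have : IsMarkovKernel (simpleKernel (Y.map N)) :=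
    isMarkovKernel_simpleKernel fun y => (hadm (Y y)).memPp
  have hpt (y : Ed d) : Sop p φ m t f (x + y) ≤
      (∫ z, f (x + y + z) ∂(N (Y y))) - c (Y y) + 2 * k y + ε / 2 := by
    have := (hadm (Y y)).memPp.1
    rw [add_assoc]
    refine sop_le_integral_sub_add hp hφ hm hf (fun z => ?_) (hN (Y y)).le
    simpa only [add_assoc, add_left_comm x] using hYk y (x + z)
  have hinner : Integrable (fun y => ∫ z, f (x + y + z) ∂(N (Y y))) ν :=
    (hf.integrable_comp_add_add (simpleKernel (Y.map N)) x).integral_compProd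
  have hcost : Integrable (fun y => c (Y y)) ν :=
    SimpleFunc.integrable_of_isFiniteMeasure (Y.map c)
  have hmono := integral_le_integral_add_const
    (((isMonetaryOp_sop hp hφ hm).isBUC hf).integrable_comp_add ν x)
    ((hinner.sub hcost).add (hk.const_mul 2)) hpt
  rw [integral_add' (hinner.sub hcost) (hk.const_mul 2), integral_sub' hinner hcost,
    integral_const_mul] at hmono
  calc ∫ y, Sop p φ m t f (x + y) ∂ν
      ≤ (∫ y, ∫ z, f (x + y + z) ∂(N (Y y)) ∂ν) - (∫ y, c (Y y) ∂ν) + ε := by linarith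
    _ = _ := by rw [integral_glue hf]; rfl

theorem sop_sop_le_sop_conv (hp : 1 ≤ p) (hφ : IsPenalty p φ) (hm₁ : MemPp p m₁)
    (hm₂ : MemPp p m₂) {s : ℝ} (hs : 0 < s) (ht : 0 < t) (hf : IsBUC f) (x : Ed d) :
    Sop p φ m₁ s (Sop p φ m₂ t f) x ≤ Sop p φ (m₁.conv m₂) (s + t) f x := by
  have hp₀ : 0 < p := one_pos.trans_le hp
  refine sop_le hp₀ hφ hm₁ fun ν k hν => le_of_forall_pos_le_add fun ε hε => ?_
  have := hν.memPp.1
  obtain ⟨N, c, hN, hle⟩ := exists_simpleFunc_isAdmissible hp₀ hφ hm₂ hf (ν := ν) x hε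
  linarith [(hν.glue hp hφ hm₁ hm₂ hs ht hN).le_sop hf x]

end Composition

/-! ### Iterating the one-step operator -/

section Semigroups

variable {d : ℕ} {p : ℝ} {φ : ℝ≥0 → ℝ≥0∞} {μ : ℝ → Measure (Ed d)} {s t : ℝ} {f : Ed d → ℝ}

theorem isMonetaryOp_smu (hμ : IsConvSemigroup p μ) (ht : 0 ≤ t) : IsMonetaryOp (Smu μ t) where
  comparison {f g x x' k} hf hg hfg := by
    have := (hμ.2.2 t ht).1
    exact integral_le_integral_add_const (hf.integrable_comp_add _ x')
      (hg.integrable_comp_add _ x) hfg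
  map_zero := funext fun x => by simp [Smu]

theorem smu_zero (hμ : IsConvSemigroup p μ) (f : Ed d → ℝ) : Smu μ 0 f = f := by
  funext x
  rw [Smu, hμ.1, integral_dirac, add_zero]

theorem smu_smu (hμ : IsConvSemigroup p μ) (hs : 0 ≤ s) (ht : 0 ≤ t) (hf : IsBUC f) :
    Smu μ s (Smu μ t f) = Smu μ (s + t) f := by
  funext x
  have := (hμ.2.2 s hs).1
  have := (hμ.2.2 t ht).1
  simp only [Smu, hμ.2.1 s t hs ht]
  rw [integral_conv (hf.integrable_comp_add _ x)]
  simp only [add_assoc]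

theorem isC0_smu (hμ : IsConvSemigroup p μ) (ht : 0 ≤ t) (hf : IsC0 f) : IsC0 (Smu μ t f) := by
  have := (hμ.2.2 t ht).1
  exact isC0_integral_comp_add hf (μ t)

/-- The operator `S(h)` of the paper: one step of length `h` starting from the reference law
`μ h`. -/
def stepOp (p : ℝ) (φ : ℝ≥0 → ℝ≥0∞) (μ : ℝ → Measure (Ed d)) (h : ℝ) (f : Ed d → ℝ) : Ed d → ℝ :=
  Sop p φ (μ h) h f

theorem isMonetaryOp_stepOp (hp : 0 < p) (hφ : IsPenalty p φ) (hμ : IsConvSemigroup p μ)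
    (ht : 0 ≤ t) : IsMonetaryOp (stepOp p φ μ t) :=
  isMonetaryOp_sop hp hφ (hμ.2.2 t ht)

theorem stepOp_zero (hp : 1 ≤ p) (hφ : IsPenalty p φ) (hμ : IsConvSemigroup p μ) (hf : IsBUC f) :
    stepOp p φ μ 0 f = f := by
  rw [stepOp, hμ.1, sop_dirac_zero hp hφ hf]

theorem isC0_stepOp (hp : 1 < p) (hφ : IsPenalty p φ) (hμ : IsConvSemigroup p μ) (ht : 0 ≤ t)
    (hf : IsC0 f) : IsC0 (stepOp p φ μ t f) := by
  rcases ht.eq_or_lt with rfl | ht'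
  · rwa [stepOp_zero hp.le hφ hμ hf.isBUC]
  · exact isC0_sop hp hφ (hμ.2.2 t ht) ht' hf

theorem smu_le_stepOp (hp : 0 < p) (hφ : IsPenalty p φ) (hμ : IsConvSemigroup p μ) (ht : 0 ≤ t)
    (hf : IsBUC f) (x : Ed d) : Smu μ t f x ≤ stepOp p φ μ t f x :=
  integral_le_sop hp hφ (hμ.2.2 t ht) hf x

theorem stepOp_stepOp_le (hp : 1 ≤ p) (hφ : IsPenalty p φ) (hμ : IsConvSemigroup p μ) (hs : 0 ≤ s)
    (ht : 0 ≤ t) (hf : IsBUC f) (x : Ed d) :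
    stepOp p φ μ s (stepOp p φ μ t f) x ≤ stepOp p φ μ (s + t) f x := by
  rcases hs.eq_or_lt with rfl | hs'
  · rw [stepOp_zero hp hφ hμ ((isMonetaryOp_stepOp (one_pos.trans_le hp) hφ hμ ht).isBUC hf),
      zero_add]
  rcases ht.eq_or_lt with rfl | ht'
  · rw [stepOp_zero hp hφ hμ hf, add_zero]
  · simp only [stepOp, hμ.2.1 s t hs ht]
    exact sop_sop_le_sop_conv hp hφ (hμ.2.2 s hs) (hμ.2.2 t ht) hs' ht' hf x

theorem iterate_stepOp_le (hp : 1 ≤ p) (hφ : IsPenalty p φ) (hμ : IsConvSemigroup p μ)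
    (hs : 0 ≤ s) (k : ℕ) (hf : IsBUC f) (x : Ed d) :
    (stepOp p φ μ s)^[k] f x ≤ stepOp p φ μ (k * s) f x := by
  have hmon {r : ℝ} (hr : 0 ≤ r) := isMonetaryOp_stepOp (one_pos.trans_le hp) hφ hμ hr
  induction k generalizing x with
  | zero => simp [stepOp_zero hp hφ hμ hf]
  | succ k ih =>
    have hks : 0 ≤ k * s := by positivity
    rw [Function.iterate_succ_apply', show ((k + 1 : ℕ) : ℝ) * s = s + k * s by push_cast; ring]
    exact ((hmon hs).mono (((hmon hs).iterate k).isBUC hf) ((hmon hks).isBUC hf) ih x).trans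
      (stepOp_stepOp_le hp hφ hμ hs hks hf x)

theorem iterate_two_mul_stepOp_le (hp : 1 ≤ p) (hφ : IsPenalty p φ) (hμ : IsConvSemigroup p μ)
    (hs : 0 ≤ s) (k : ℕ) (hf : IsBUC f) (x : Ed d) :
    (stepOp p φ μ s)^[2 * k] f x ≤ (stepOp p φ μ (2 * s))^[k] f x := by
  have hmon {r : ℝ} (hr : 0 ≤ r) := isMonetaryOp_stepOp (one_pos.trans_le hp) hφ hμ hr
  have hs₂ : 0 ≤ 2 * s := by positivity
  induction k generalizing x with
  | zero => rfl
  | succ k ih =>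
    have hbuc := ((hmon hs).iterate (2 * k)).isBUC hf
    calc (stepOp p φ μ s)^[2 * (k + 1)] f x
        = stepOp p φ μ s (stepOp p φ μ s ((stepOp p φ μ s)^[2 * k] f)) x := by
          rw [show 2 * (k + 1) = 2 * k + 1 + 1 by ring, Function.iterate_succ_apply',
            Function.iterate_succ_apply']
      _ ≤ stepOp p φ μ (2 * s) ((stepOp p φ μ s)^[2 * k] f) x := by
          simpa only [two_mul] using stepOp_stepOp_le hp hφ hμ hs hs hbuc x
      _ ≤ stepOp p φ μ (2 * s) ((stepOp p φ μ (2 * s))^[k] f) x :=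
          (hmon hs₂).mono hbuc (((hmon hs₂).iterate k).isBUC hf) ih x
      _ = (stepOp p φ μ (2 * s))^[k + 1] f x := by rw [Function.iterate_succ_apply']

theorem smu_add_smul_sub_le_stepOp (hp : 1 ≤ p) (hφ : IsPenalty p φ) (hμ : IsConvSemigroup p μ)
    (ht : 0 ≤ t) (hf : IsBUC f) {b : Ed d} {c : ℝ} (hb : PenaltyLE φ ‖b‖ c) (x : Ed d) :
    Smu μ t f (x + t • b) - t * c ≤ stepOp p φ μ t f x := by
  rcases ht.eq_or_lt with rfl | ht'
  · simp [stepOp_zero hp hφ hμ hf, smu_zero hμ]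
  · exact integral_comp_add_smul_sub_le_sop (one_pos.trans_le hp) hφ (hμ.2.2 t ht) ht' hf hb x

theorem smu_add_smul_sub_le_iterate_stepOp (hp : 1 ≤ p) (hφ : IsPenalty p φ)
    (hμ : IsConvSemigroup p μ) (hs : 0 ≤ s) (k : ℕ) (hf : IsBUC f) {b : Ed d} {c : ℝ}
    (hb : PenaltyLE φ ‖b‖ c) (x : Ed d) :
    Smu μ (k * s) f (x + (k * s) • b) - k * s * c ≤ (stepOp p φ μ s)^[k] f x := by
  induction k generalizing x with
  | zero => simp [smu_zero hμ]
  | succ k ih =>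
    have hks : 0 ≤ k * s := by positivity
    have hbuc := ((isMonetaryOp_stepOp (one_pos.trans_le hp) hφ hμ hs).iterate k).isBUC hf
    have hsmu := (isMonetaryOp_smu hμ hs).comparison ((isMonetaryOp_smu hμ hks).isBUC hf) hbuc
      (x' := x + s • b + (k * s) • b) (x := x + s • b) (k := k * s * c) fun y => by
        rw [add_right_comm]
        linarith [ih (x + s • b + y)]
    have hstep := smu_add_smul_sub_le_stepOp hp hφ hμ hs hbuc hb x
    rw [smu_smu hμ hs hks hf, add_assoc, ← add_smul] at hsmu
    rw [Function.iterate_succ_apply', show ((k + 1 : ℕ) : ℝ) * s = s + k * s by push_cast; ring]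
    linarith

end Semigroups

section Dyadic

/-- The length `2⁻ⁿ` of the steps taken by `SiterN _ _ _ n`. -/
def dyadicStep (n : ℕ) : ℝ := ((2 : ℝ) ^ n)⁻¹

theorem dyadicStep_pos (n : ℕ) : 0 < dyadicStep n := by
  unfold dyadicStep
  positivity

theorem two_mul_dyadicStep_succ (n : ℕ) : 2 * dyadicStep (n + 1) = dyadicStep n := by
  simp only [dyadicStep, pow_succ]
  field_simp

theorem two_pow_sub_mul_dyadicStep {m n : ℕ} (h : m ≤ n) :
    ((2 ^ (n - m) : ℕ) : ℝ) * dyadicStep n = dyadicStep m := by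
  obtain ⟨j, rfl⟩ := Nat.exists_eq_add_of_le h
  simp only [dyadicStep, Nat.add_sub_cancel_left, pow_add, Nat.cast_pow, Nat.cast_ofNat]
  field_simp

theorem tendsto_dyadicStep : Tendsto dyadicStep atTop (𝓝[>] 0) :=
  tendsto_inv_atTop_nhdsGT_zero.comp (tendsto_pow_atTop_atTop_of_one_lt one_lt_two)

theorem exists_eq_mul_dyadicStep_add (n : ℕ) {t : ℝ} (ht : 0 ≤ t) :
    ∃ (k : ℕ) (r : ℝ), 0 ≤ r ∧ r < dyadicStep n ∧ t = k * dyadicStep n + r := by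
  have hδ := dyadicStep_pos n
  have hfloor := Nat.floor_le (div_nonneg ht hδ.le)
  have hlt := Nat.lt_floor_add_one (t / dyadicStep n)
  rw [le_div_iff₀ hδ] at hfloor
  rw [div_lt_iff₀ hδ] at hlt
  exact ⟨⌊t / dyadicStep n⌋₊, t - ⌊t / dyadicStep n⌋₊ * dyadicStep n, by linarith, by linarith,
    by ring⟩

end Dyadic

section DyadicIterates

variable {d : ℕ} {p : ℝ} {φ : ℝ≥0 → ℝ≥0∞} {μ : ℝ → Measure (Ed d)} {t : ℝ} {f : Ed d → ℝ}

theorem siterN_mul_add_of_lt (p : ℝ) (φ : ℝ≥0 → ℝ≥0∞) (μ : ℝ → Measure (Ed d)) (n k : ℕ) {r : ℝ}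
    (hr : 0 ≤ r) (hrn : r < dyadicStep n) (f : Ed d → ℝ) :
    SiterN p φ μ n (k * dyadicStep n + r) f =
      (stepOp p φ μ (dyadicStep n))^[k] (stepOp p φ μ r f) := by
  have hδ := dyadicStep_pos n
  have hfloor : ⌊(2 : ℝ) ^ n * (k * dyadicStep n + r)⌋₊ = k := by
    rw [← inv_inv ((2 : ℝ) ^ n), ← dyadicStep, inv_mul_eq_div, Nat.floor_eq_iff (by positivity),
      le_div_iff₀ hδ, div_lt_iff₀ hδ]
    constructor <;> linarith
  have hrem : r = k * dyadicStep n + r - k * ((2 : ℝ) ^ n)⁻¹ := by simp [dyadicStep]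
  rw [SiterN, hfloor, ← hrem]
  rfl

theorem siterN_mul_add (n k : ℕ) (ht : 0 ≤ t) (f : Ed d → ℝ) :
    SiterN p φ μ n (k * dyadicStep n + t) f =
      (stepOp p φ μ (dyadicStep n))^[k] (SiterN p φ μ n t f) := by
  obtain ⟨j, r, hr, hrn, rfl⟩ := exists_eq_mul_dyadicStep_add n ht
  rw [siterN_mul_add_of_lt _ _ _ _ _ hr hrn, ← Function.iterate_add_apply,
    ← siterN_mul_add_of_lt _ _ _ _ _ hr hrn]
  push_cast
  ring_nf

theorem isMonetaryOp_siterN (hp : 0 < p) (hφ : IsPenalty p φ) (hμ : IsConvSemigroup p μ) (n : ℕ)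
    (ht : 0 ≤ t) : IsMonetaryOp (SiterN p φ μ n t) := by
  obtain ⟨k, r, hr, hrn, rfl⟩ := exists_eq_mul_dyadicStep_add n ht
  rw [funext (siterN_mul_add_of_lt p φ μ n k hr hrn)]
  exact ((isMonetaryOp_stepOp hp hφ hμ (dyadicStep_pos n).le).iterate k).comp
    (isMonetaryOp_stepOp hp hφ hμ hr)

theorem siterN_le_stepOp (hp : 1 ≤ p) (hφ : IsPenalty p φ) (hμ : IsConvSemigroup p μ) (n : ℕ)
    (ht : 0 ≤ t) (hf : IsBUC f) (x : Ed d) : SiterN p φ μ n t f x ≤ stepOp p φ μ t f x := by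
  obtain ⟨k, r, hr, hrn, rfl⟩ := exists_eq_mul_dyadicStep_add n ht
  have hδ := dyadicStep_pos n
  rw [siterN_mul_add_of_lt _ _ _ _ _ hr hrn]
  exact (iterate_stepOp_le hp hφ hμ hδ.le k
    ((isMonetaryOp_stepOp (one_pos.trans_le hp) hφ hμ hr).isBUC hf) x).trans
    (stepOp_stepOp_le hp hφ hμ (by positivity) hr hf x)

theorem smu_le_siterN (hp : 1 ≤ p) (hφ : IsPenalty p φ) (hμ : IsConvSemigroup p μ) (n : ℕ)
    (ht : 0 ≤ t) (hf : IsBUC f) (x : Ed d) : Smu μ t f x ≤ SiterN p φ μ n t f x := by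
  have hp₀ : 0 < p := one_pos.trans_le hp
  obtain ⟨k, r, hr, hrn, rfl⟩ := exists_eq_mul_dyadicStep_add n ht
  have hδ := dyadicStep_pos n
  have hkδ : 0 ≤ k * dyadicStep n := by positivity
  have hbuc := (isMonetaryOp_stepOp hp₀ hφ hμ hr).isBUC hf
  rw [siterN_mul_add_of_lt _ _ _ _ _ hr hrn, ← smu_smu hμ hkδ hr hf]
  refine ((isMonetaryOp_smu hμ hkδ).mono ((isMonetaryOp_smu hμ hr).isBUC hf) hbuc
    (smu_le_stepOp hp₀ hφ hμ hr hf) x).trans ?_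
  simpa using smu_add_smul_sub_le_iterate_stepOp hp hφ hμ hδ.le k hbuc (b := 0) (c := 0)
    (by simpa using hφ.penaltyLE_zero) x

theorem antitone_siterN (hp : 1 ≤ p) (hφ : IsPenalty p φ) (hμ : IsConvSemigroup p μ) (ht : 0 ≤ t)
    (hf : IsBUC f) (x : Ed d) : Antitone fun n => SiterN p φ μ n t f x := by
  have hp₀ : 0 < p := one_pos.trans_le hp
  refine antitone_nat_of_succ_le fun n => ?_
  obtain ⟨k, r, hr, hrn, rfl⟩ := exists_eq_mul_dyadicStep_add n ht
  have hbuc := (isMonetaryOp_siterN hp₀ hφ hμ (n + 1) hr).isBUC hf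
  have hδ := dyadicStep_pos n
  calc SiterN p φ μ (n + 1) (k * dyadicStep n + r) f x
      = (stepOp p φ μ (dyadicStep (n + 1)))^[2 * k] (SiterN p φ μ (n + 1) r f) x := by
        rw [← siterN_mul_add _ _ hr, ← two_mul_dyadicStep_succ]
        push_cast
        ring_nf
    _ ≤ (stepOp p φ μ (dyadicStep n))^[k] (SiterN p φ μ (n + 1) r f) x := by
        simpa only [two_mul_dyadicStep_succ] using
          iterate_two_mul_stepOp_le hp hφ hμ (dyadicStep_pos (n + 1)).le k hbuc x
    _ ≤ (stepOp p φ μ (dyadicStep n))^[k] (stepOp p φ μ r f) x :=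
        ((isMonetaryOp_stepOp hp₀ hφ hμ hδ.le).iterate k).mono hbuc
          ((isMonetaryOp_stepOp hp₀ hφ hμ hr).isBUC hf) (siterN_le_stepOp hp hφ hμ _ hr hf) x
    _ = SiterN p φ μ n (k * dyadicStep n + r) f x := by rw [siterN_mul_add_of_lt _ _ _ _ _ hr hrn]

end DyadicIterates

/-! ### The limit of the dyadic iterates -/

section Limit

variable {d : ℕ} {p : ℝ} {φ : ℝ≥0 → ℝ≥0∞} {μ : ℝ → Measure (Ed d)} {t : ℝ} {f : Ed d → ℝ}

theorem tendsto_siterN (hp : 1 ≤ p) (hφ : IsPenalty p φ) (hμ : IsConvSemigroup p μ) (ht : 0 ≤ t)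
    (hf : IsBUC f) (x : Ed d) :
    Tendsto (fun n => SiterN p φ μ n t f x) atTop (𝓝 (Slim p φ μ t f x)) := by
  refine tendsto_atTop_ciInf (antitone_siterN hp hφ hμ ht hf x) ⟨Smu μ t f x, ?_⟩
  rintro _ ⟨n, rfl⟩
  exact smu_le_siterN hp hφ hμ n ht hf x

theorem slim_le_siterN (hp : 1 ≤ p) (hφ : IsPenalty p φ) (hμ : IsConvSemigroup p μ) (n : ℕ)
    (ht : 0 ≤ t) (hf : IsBUC f) (x : Ed d) : Slim p φ μ t f x ≤ SiterN p φ μ n t f x :=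
  (antitone_siterN hp hφ hμ ht hf x).le_of_tendsto (tendsto_siterN hp hφ hμ ht hf x) n

theorem smu_le_slim (hp : 1 ≤ p) (hφ : IsPenalty p φ) (hμ : IsConvSemigroup p μ) (ht : 0 ≤ t)
    (hf : IsBUC f) (x : Ed d) : Smu μ t f x ≤ Slim p φ μ t f x :=
  le_ciInf fun n => smu_le_siterN hp hφ hμ n ht hf x

theorem slim_le_stepOp (hp : 1 ≤ p) (hφ : IsPenalty p φ) (hμ : IsConvSemigroup p μ) (ht : 0 ≤ t)
    (hf : IsBUC f) (x : Ed d) : Slim p φ μ t f x ≤ stepOp p φ μ t f x :=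
  (slim_le_siterN hp hφ hμ 0 ht hf x).trans (siterN_le_stepOp hp hφ hμ 0 ht hf x)

theorem slim_zero (hp : 1 ≤ p) (hφ : IsPenalty p φ) (hμ : IsConvSemigroup p μ) (hf : IsBUC f) :
    Slim p φ μ 0 f = f := by
  refine le_antisymm (fun x => ?_) fun x => ?_
  · simpa only [stepOp_zero hp hφ hμ hf] using slim_le_stepOp hp hφ hμ le_rfl hf x
  · simpa only [smu_zero hμ] using smu_le_slim hp hφ hμ le_rfl hf x

theorem isMonetaryOp_slim (hp : 1 ≤ p) (hφ : IsPenalty p φ) (hμ : IsConvSemigroup p μ)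
    (ht : 0 ≤ t) : IsMonetaryOp (Slim p φ μ t) :=
  .of_tendsto (fun n => isMonetaryOp_siterN (one_pos.trans_le hp) hφ hμ n ht)
    fun _ hf => tendsto_siterN hp hφ hμ ht hf

theorem isC0_slim (hp : 1 < p) (hφ : IsPenalty p φ) (hμ : IsConvSemigroup p μ) (ht : 0 ≤ t)
    (hf : IsC0 f) : IsC0 (Slim p φ μ t f) :=
  ⟨((isMonetaryOp_slim hp.le hφ hμ ht).isBUC hf.isBUC).continuous,
    tendsto_of_tendsto_of_tendsto_of_le_of_le (isC0_smu hμ ht hf).2 (isC0_stepOp hp hφ hμ ht hf).2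
      (smu_le_slim hp.le hφ hμ ht hf.isBUC) (slim_le_stepOp hp.le hφ hμ ht hf.isBUC)⟩

-- Dini's theorem on a large ball; outside it `Smu μ t f` and `stepOp p φ μ t f` enclose everything.
theorem tendstoUniformly_siterN (hp : 1 < p) (hφ : IsPenalty p φ) (hμ : IsConvSemigroup p μ)
    (ht : 0 ≤ t) (hf : IsC0 f) :
    TendstoUniformly (fun n => SiterN p φ μ n t f) (Slim p φ μ t f) atTop := by
  rw [Metric.tendstoUniformly_iff]
  intro ε hε
  have hlower := (isC0_smu hμ ht hf).2.eventually_const_lt (show -(ε / 2) < 0 by linarith)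
  have hupper := (isC0_stepOp hp hφ hμ ht hf).2.eventually_lt_const (half_pos hε)
  obtain ⟨K, hK, hKtail⟩ := mem_cocompact.1 (hlower.and hupper)
  have hdini := Antitone.tendstoUniformlyOn_of_forall_tendsto hK
    (fun n => ((isMonetaryOp_siterN (one_pos.trans hp) hφ hμ n ht).isBUC
      hf.isBUC).continuous.continuousOn)
    (fun x _ => antitone_siterN hp.le hφ hμ ht hf.isBUC x)
    (isC0_slim hp hφ hμ ht hf).1.continuousOn
    (fun x _ => tendsto_siterN hp.le hφ hμ ht hf.isBUC x)
  filter_upwards [Metric.tendstoUniformlyOn_iff.1 hdini ε hε] with n hn x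
  by_cases hx : x ∈ K
  · exact hn x hx
  · obtain ⟨hxl, hxu⟩ := hKtail hx
    rw [Real.dist_eq, abs_lt]
    constructor <;> linarith [siterN_le_stepOp hp.le hφ hμ n ht hf.isBUC x,
      smu_le_slim hp.le hφ hμ ht hf.isBUC x, slim_le_siterN hp.le hφ hμ n ht hf.isBUC x]

end Limit

section ShortTime

variable {d : ℕ} {p : ℝ} {φ : ℝ≥0 → ℝ≥0∞} {μ : ℝ → Measure (Ed d)} {f : Ed d → ℝ} {ε : ℝ}

theorem tendsto_wp_dirac_nhdsGE (hp : 0 < p) (hμ : IsConvSemigroup p μ)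
    (hμ₀ : WContinuousAtZero p μ) :
    Tendsto (fun t => Wp p (μ t) (Measure.dirac 0)) (𝓝[≥] 0) (𝓝 0) := by
  have hzero : Wp p (μ 0) (Measure.dirac 0) = 0 := by rw [hμ.1, wp_self hp]
  have hcont : ContinuousWithinAt (fun t => Wp p (μ t) (Measure.dirac 0)) (Ioi 0) 0 := by
    rwa [ContinuousWithinAt, hzero]
  simpa only [ContinuousWithinAt, hzero] using continuousWithinAt_Ioi_iff_Ici.1 hcont

theorem eventually_le_smu_add (hp : 1 ≤ p) (hμ : IsConvSemigroup p μ) (hμ₀ : WContinuousAtZero p μ)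
    (hf : IsBUC f) (hε : 0 < ε) : ∀ᶠ h in 𝓝[≥] 0, ∀ x, f x ≤ Smu μ h f x + ε := by
  obtain ⟨C, hC, hmod⟩ := hf.exists_hasAffineModulus (half_pos hε)
  have hlim : Tendsto (fun h => C * Wp p (μ h) (Measure.dirac 0)) (𝓝[≥] 0) (𝓝 0) := by
    simpa using (tendsto_wp_dirac_nhdsGE (one_pos.trans_le hp) hμ hμ₀).const_mul C
  filter_upwards [hlim.eventually_lt_const (half_pos hε), self_mem_nhdsWithin] with h hW hh x
  have hmem := hμ.2.2 h hh
  have := hmem.1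
  have hle := integral_le_integral_add_wp hp hmem (memPp_dirac (one_pos.trans_le hp) 0) hC le_rfl
    (hf.integrable_comp_add _ x) ((hf.add (.const (ε / 2))).integrable_comp_add _ x)
    fun a b => by simpa using hmod (x + a) (x + b)
  rw [integral_add (hf.integrable_comp_add _ x) (integrable_const _), integral_dirac,
    integral_const, probReal_univ, one_smul, add_zero, zero_mul, add_zero] at hle
  rw [Smu]
  linarith

theorem eventually_smu_le_add (hp : 1 ≤ p) (hμ : IsConvSemigroup p μ) (hμ₀ : WContinuousAtZero p μ)
    (hf : IsBUC f) (hε : 0 < ε) : ∀ᶠ h in 𝓝[≥] 0, ∀ x, Smu μ h f x ≤ f x + ε := by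
  filter_upwards [eventually_le_smu_add hp hμ hμ₀ (hf.const_mul (-1)) hε] with h hh x
  have hx := hh x
  rw [Smu, integral_const_mul] at hx
  rw [Smu]
  linarith

theorem eventually_stepOp_le_add (hp : 1 < p) (hφ : IsPenalty p φ) (hμ : IsConvSemigroup p μ)
    (hμ₀ : WContinuousAtZero p μ) (hf : IsBUC f) (hε : 0 < ε) :
    ∀ᶠ h in 𝓝[≥] 0, ∀ x, stepOp p φ μ h f x ≤ f x + ε := by
  obtain ⟨C, hC, hmod⟩ := hf.exists_hasAffineModulus (show 0 < ε / 3 by positivity)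
  set Φ := (phiStar φ C.toNNReal).toReal
  have hconj (r k : ℝ) (h : PenaltyLE φ r k) : C * r + 0 * r ^ p - k ≤ Φ := by
    simpa [Real.coe_toNNReal C hC] using h.mul_sub_le_phiStar hp hφ C.toNNReal
  have hlim : Tendsto (fun h : ℝ => h * Φ) (𝓝[≥] 0) (𝓝 0) :=
    ((continuous_mul_const Φ).tendsto' 0 0 (zero_mul Φ)).mono_left nhdsWithin_le_nhds
  filter_upwards [hlim.eventually_lt_const (show 0 < ε / 3 by positivity), self_mem_nhdsWithin,
    eventually_smu_le_add hp.le hμ hμ₀ hf (show 0 < ε / 3 by positivity)] with h hΦ hh hsmu x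
  rcases (mem_Ici.1 hh).eq_or_lt with rfl | hpos
  · rw [stepOp_zero hp.le hφ hμ hf]
    linarith
  have hmem := hμ.2.2 h hpos.le
  have := hmem.1
  have hle := sop_le_of_growth hp.le hφ hmem hpos hf (hf.add (.const (ε / 3))) hC le_rfl hconj
    (fun a b => by simpa using hmod a b) x
  rw [integral_add (hf.integrable_comp_add _ x) (integrable_const _), integral_const,
    probReal_univ, one_smul] at hle
  have := hsmu x
  rw [Smu] at this
  rw [stepOp]
  linarith

theorem eventually_abs_siterN_sub_le (hp : 1 < p) (hφ : IsPenalty p φ) (hμ : IsConvSemigroup p μ)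
    (hμ₀ : WContinuousAtZero p μ) (hf : IsBUC f) (hε : 0 < ε) :
    ∀ᶠ h in 𝓝[≥] 0, ∀ n x, |SiterN p φ μ n h f x - f x| ≤ ε := by
  filter_upwards [self_mem_nhdsWithin, eventually_le_smu_add hp.le hμ hμ₀ hf hε,
    eventually_stepOp_le_add hp hφ hμ hμ₀ hf hε] with h hh hsmu hstep n x
  rw [abs_le]
  constructor <;> linarith [hsmu x, hstep x, siterN_le_stepOp hp.le hφ hμ n hh hf x,
    smu_le_siterN hp.le hφ hμ n hh hf x]

theorem exists_abs_slim_sub_slim_le (hp : 1 < p) (hφ : IsPenalty p φ) (hμ : IsConvSemigroup p μ)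
    (hμ₀ : WContinuousAtZero p μ) (hf : IsBUC f) (hε : 0 < ε) :
    ∃ η > 0, ∀ s t, 0 ≤ s → s ≤ t → t - s < η → ∀ x,
      |Slim p φ μ t f x - Slim p φ μ s f x| ≤ ε := by
  obtain ⟨η, hη, hshort⟩ := mem_nhdsGE_iff_exists_Ico_subset.1
    (eventually_abs_siterN_sub_le hp hφ hμ hμ₀ hf (half_pos hε))
  rw [mem_Ioi] at hη
  refine ⟨η / 2, half_pos hη, fun s t hs hst hsη x => ?_⟩
  refine le_of_tendsto ((tendsto_siterN hp.le hφ hμ (hs.trans hst) hf x).sub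
    (tendsto_siterN hp.le hφ hμ hs hf x)).abs ?_
  have hdyadic := tendsto_nhds_of_tendsto_nhdsWithin tendsto_dyadicStep
  filter_upwards [hdyadic.eventually_lt_const (half_pos hη)] with n hn
  obtain ⟨k, r, hr, hrn, rfl⟩ := exists_eq_mul_dyadicStep_add n hs
  obtain ⟨q, hq, rfl⟩ : ∃ q, 0 ≤ q ∧ t = k * dyadicStep n + q :=
    ⟨t - k * dyadicStep n, by linarith, by ring⟩
  have hmon {a : ℝ} (ha : 0 ≤ a) := isMonetaryOp_siterN (one_pos.trans hp) hφ hμ n ha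
  have hiter := (isMonetaryOp_stepOp (one_pos.trans hp) hφ hμ (dyadicStep_pos n).le).iterate k
  have hclose (y : Ed d) : |SiterN p φ μ n q f y - SiterN p φ μ n r f y| ≤ ε := by
    have hqf := hshort (show q ∈ Ico 0 η from ⟨hq, by linarith⟩) n y
    have hrf := hshort (show r ∈ Ico 0 η from ⟨hr, by linarith⟩) n y
    rw [abs_sub_comm] at hrf
    linarith [abs_sub_le (SiterN p φ μ n q f y) (f y) (SiterN p φ μ n r f y)]
  rw [siterN_mul_add n k hq, siterN_mul_add n k hr, abs_sub_le_iff, sub_le_iff_le_add',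
    sub_le_iff_le_add']
  exact ⟨hiter.le_add_const ((hmon hq).isBUC hf) ((hmon hr).isBUC hf)
      (fun y => by linarith [(abs_le.1 (hclose y)).2]) x,
    hiter.le_add_const ((hmon hr).isBUC hf) ((hmon hq).isBUC hf)
      (fun y => by linarith [(abs_le.1 (hclose y)).1]) x⟩

end ShortTime

/-! ### Dynamic programming inequalities -/

section DynamicProgramming

variable {d : ℕ} {p : ℝ} {φ : ℝ≥0 → ℝ≥0∞} {μ : ℝ → Measure (Ed d)} {t : ℝ} {f : Ed d → ℝ} {m : ℕ}

theorem siterN_dyadicStep_add {n : ℕ} (hmn : m ≤ n) (ht : 0 ≤ t) (f : Ed d → ℝ) :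
    SiterN p φ μ n (dyadicStep m + t) f =
      (stepOp p φ μ (dyadicStep n))^[2 ^ (n - m)] (SiterN p φ μ n t f) := by
  rw [← siterN_mul_add n _ ht, two_pow_sub_mul_dyadicStep hmn]

theorem slim_dyadicStep_add_le (hp : 1 < p) (hφ : IsPenalty p φ) (hμ : IsConvSemigroup p μ)
    (m : ℕ) (ht : 0 ≤ t) (hf : IsC0 f) (x : Ed d) :
    Slim p φ μ (dyadicStep m + t) f x ≤ stepOp p φ μ (dyadicStep m) (Slim p φ μ t f) x := by
  have hp₀ : 0 < p := one_pos.trans hp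
  have hδ (n : ℕ) := (dyadicStep_pos n).le
  refine le_of_forall_pos_le_add fun ε hε => ?_
  obtain ⟨n, hmn, hn⟩ := ((eventually_ge_atTop m).and
    (Metric.tendstoUniformly_iff.1 (tendstoUniformly_siterN hp hφ hμ ht hf) ε hε)).exists
  have hbuc := (isMonetaryOp_siterN hp₀ hφ hμ n ht).isBUC hf.isBUC
  calc Slim p φ μ (dyadicStep m + t) f x
      ≤ SiterN p φ μ n (dyadicStep m + t) f x :=
        slim_le_siterN hp.le hφ hμ n (add_nonneg (hδ m) ht) hf.isBUC x
    _ = (stepOp p φ μ (dyadicStep n))^[2 ^ (n - m)] (SiterN p φ μ n t f) x := by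
        rw [siterN_dyadicStep_add hmn ht]
    _ ≤ stepOp p φ μ (dyadicStep m) (SiterN p φ μ n t f) x := by
        simpa only [two_pow_sub_mul_dyadicStep hmn] using
          iterate_stepOp_le hp.le hφ hμ (hδ n) (2 ^ (n - m)) hbuc x
    _ ≤ stepOp p φ μ (dyadicStep m) (Slim p φ μ t f) x + ε :=
        (isMonetaryOp_stepOp hp₀ hφ hμ (hδ m)).le_add_const hbuc
          (isC0_slim hp hφ hμ ht hf).isBUC (fun y => by
            have := hn y
            rw [Real.dist_eq, abs_lt] at this
            linarith) x

theorem smu_add_smul_sub_le_slim (hp : 1 ≤ p) (hφ : IsPenalty p φ) (hμ : IsConvSemigroup p μ)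
    (m : ℕ) (ht : 0 ≤ t) (hf : IsBUC f) {b : Ed d} {c : ℝ} (hb : PenaltyLE φ ‖b‖ c) (x : Ed d) :
    Smu μ (dyadicStep m) (Slim p φ μ t f) (x + dyadicStep m • b) - dyadicStep m * c ≤
      Slim p φ μ (dyadicStep m + t) f x := by
  have hδ (n : ℕ) := (dyadicStep_pos n).le
  refine ge_of_tendsto (tendsto_siterN hp hφ hμ (add_nonneg (hδ m) ht) hf x) ?_
  filter_upwards [eventually_ge_atTop m] with n hmn
  have hbuc := (isMonetaryOp_siterN (one_pos.trans_le hp) hφ hμ n ht).isBUC hf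
  have hmono := (isMonetaryOp_smu hμ (hδ m)).mono ((isMonetaryOp_slim hp hφ hμ ht).isBUC hf) hbuc
    (slim_le_siterN hp hφ hμ n ht hf) (x + dyadicStep m • b)
  have hiter := smu_add_smul_sub_le_iterate_stepOp hp hφ hμ (hδ n) (2 ^ (n - m)) hbuc hb x
  rw [two_pow_sub_mul_dyadicStep hmn] at hiter
  rw [siterN_dyadicStep_add hmn ht]
  linarith

end DynamicProgramming

/-! ### Short-time expansions -/

section Expansions

variable {d : ℕ} {p : ℝ} {μ : ℝ → Measure (Ed d)} {f Af g : Ed d → ℝ} {t ε : ℝ}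

theorem eventually_abs_sub_le_of_hasDerivAt {v : ℝ → C₀(Ed d, ℝ)} {e : C₀(Ed d, ℝ)}
    (hv : HasDerivAt v e t) (hε : 0 < ε) :
    ∀ᶠ h in 𝓝[>] 0, ∀ y, |v (t - h) y - (v t y - h * e y)| ≤ ε * h := by
  have hneg : Tendsto (fun h : ℝ => -h) (𝓝[>] 0) (𝓝 0) :=
    (continuous_neg.tendsto' 0 0 neg_zero).mono_left nhdsWithin_le_nhds
  filter_upwards [hneg.eventually ((hasDerivAt_iff_isLittleO_nhds_zero.1 hv).bound hε),
    self_mem_nhdsWithin] with h hh hpos y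
  rw [norm_neg, Real.norm_of_nonneg (mem_Ioi.1 hpos).le,
    ← ZeroAtInftyContinuousMap.norm_toBCF_eq_norm] at hh
  refine le_trans (le_of_eq ?_) ((BoundedContinuousFunction.norm_coe_le_norm _ y).trans hh)
  simp [← sub_eq_add_neg, sub_add]

theorem smu_add_const_mul (hμ : IsConvSemigroup p μ) (ht : 0 ≤ t) (hf : IsBUC f) (hg : IsBUC g)
    (k : ℝ) (x : Ed d) : Smu μ t (fun y => f y + k * g y) x = Smu μ t f x + k * Smu μ t g x := by
  have := (hμ.2.2 t ht).1
  simp only [Smu]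
  rw [integral_add (hf.integrable_comp_add _ x) ((hg.const_mul k).integrable_comp_add _ x),
    integral_const_mul]

namespace HasGenerator

theorem eventually_abs_smu_sub_le (hA : HasGenerator μ f Af) (hε : 0 < ε) :
    ∀ᶠ h in 𝓝[>] 0, ∀ x, |Smu μ h f x - (f x + h * Af x)| ≤ ε * h := by
  filter_upwards [Metric.tendstoUniformly_iff.1 hA ε hε, self_mem_nhdsWithin] with h hh hpos x
  rw [mem_Ioi] at hpos
  have hscale : Smu μ h f x - (f x + h * Af x) = ((Smu μ h f x - f x) / h - Af x) * h := by
    field_simp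
    ring
  have hx := (hh x).le
  rw [dist_comm, Real.dist_eq] at hx
  rw [hscale, abs_mul, abs_of_pos hpos]
  gcongr

protected theorem continuous (hA : HasGenerator μ f Af) (hμ : IsConvSemigroup p μ)
    (hf : IsBUC f) : Continuous Af := by
  refine TendstoUniformly.continuous hA (Eventually.frequently ?_)
  filter_upwards [self_mem_nhdsWithin] with h hpos
  exact (((isMonetaryOp_smu hμ (mem_Ioi.1 hpos).le).isBUC hf).continuous.sub
    hf.continuous).div_const h

theorem eventually_abs_smu_add_const_mul_sub_le (hA : HasGenerator μ f Af) (hp : 1 ≤ p)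
    (hμ : IsConvSemigroup p μ) (hμ₀ : WContinuousAtZero p μ) (hf : IsBUC f) (hg : IsBUC g)
    (hε : 0 < ε) :
    ∀ᶠ h in 𝓝[>] 0, ∀ x,
      |Smu μ h (fun y => f y + h * g y) x - (f x + h * (Af x + g x))| ≤ ε * h := by
  have hright : 𝓝[>] (0 : ℝ) ≤ 𝓝[≥] 0 := nhdsWithin_mono 0 Ioi_subset_Ici_self
  filter_upwards [self_mem_nhdsWithin, hA.eventually_abs_smu_sub_le (half_pos hε),
    hright (eventually_le_smu_add hp hμ hμ₀ hg (half_pos hε)),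
    hright (eventually_smu_le_add hp hμ hμ₀ hg (half_pos hε))] with h hpos hgen hlower hupper x
  rw [mem_Ioi] at hpos
  have hgx : |Smu μ h g x - g x| ≤ ε / 2 :=
    abs_le.2 ⟨by linarith [hlower x], by linarith [hupper x]⟩
  rw [smu_add_const_mul hμ hpos.le hf hg]
  calc |Smu μ h f x + h * Smu μ h g x - (f x + h * (Af x + g x))|
      = |(Smu μ h f x - (f x + h * Af x)) + h * (Smu μ h g x - g x)| := by congr 1; ring
    _ ≤ |Smu μ h f x - (f x + h * Af x)| + h * |Smu μ h g x - g x| := by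
        rw [← abs_of_pos hpos, ← abs_mul, abs_of_pos hpos]
        exact abs_add_le _ _
    _ ≤ ε / 2 * h + h * (ε / 2) := by gcongr; exact hgen x
    _ = ε * h := by ring

end HasGenerator

theorem eventually_add_mul_inner_sub_le {E : Type*} [NormedAddCommGroup E] [InnerProductSpace ℝ E]
    [CompleteSpace E] {w : E → ℝ} {x : E} (hw : DifferentiableAt ℝ w x) (b : E) (hε : 0 < ε) :
    ∀ᶠ h in 𝓝[>] (0 : ℝ), w x + h * (inner ℝ (gradient w x) b - ε) ≤ w (x + h • b) := by
  have hline : HasDerivAt (fun h : ℝ => w (x + h • b)) (inner ℝ (gradient w x) b) 0 := by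
    simpa [HasLineDerivAt] using hw.hasGradientAt.hasFDerivAt.hasLineDerivAt b
  filter_upwards [((hasDerivAt_iff_isLittleO_nhds_zero.1 hline).bound hε).filter_mono
    nhdsWithin_le_nhds, self_mem_nhdsWithin] with h hh hpos
  rw [mem_Ioi] at hpos
  rw [Real.norm_of_nonneg hpos.le, Real.norm_eq_abs, zero_add, zero_smul, add_zero,
    smul_eq_mul] at hh
  linarith [(abs_le.1 hh).1]

end Expansions

/-! ### The supersolution property -/

section Supersolution

theorem phiStar_nnnorm_le_ofReal {E : Type*} [NormedAddCommGroup E] [InnerProductSpace ℝ E]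
    {φ : ℝ≥0 → ℝ≥0∞} {g : E} {k : ℝ}
    (hk : ∀ b c, PenaltyLE φ ‖b‖ c → inner ℝ g b - c ≤ k) :
    phiStar φ ‖g‖₊ ≤ ENNReal.ofReal k := by
  refine iSup_le fun r => ?_
  rcases eq_or_ne (φ r) ∞ with htop | hfin
  · simp [htop]
  rcases eq_or_ne g 0 with rfl | hg
  · simp
  have hg' : 0 < ‖g‖ := norm_pos_iff.2 hg
  set b : E := ((r : ℝ) / ‖g‖) • g
  have hnorm : ‖b‖ = r := by
    rw [norm_smul, Real.norm_of_nonneg (by positivity), div_mul_cancel₀ _ hg'.ne']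
  have hinner : inner ℝ g b = r * ‖g‖ := by
    rw [inner_smul_right, real_inner_self_eq_norm_sq]
    field_simp
  have hle := hk b (φ r).toReal
    ⟨norm_nonneg b, toReal_nonneg, by rw [hnorm, Real.toNNReal_coe, ofReal_toReal hfin]⟩
  rw [tsub_le_iff_right, ← ofReal_toReal hfin,
    ← ENNReal.ofReal_coe_nnreal, NNReal.coe_mul, coe_nnnorm]
  exact (ofReal_le_ofReal (by linarith)).trans ofReal_add_le

variable {d : ℕ} {p : ℝ} {φ : ℝ≥0 → ℝ≥0∞} {μ : ℝ → Measure (Ed d)} {t ε : ℝ} {x : Ed d}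
  {f Av : Ed d → ℝ} {v : ℝ → C₀(Ed d, ℝ)} {e : C₀(Ed d, ℝ)}

theorem eventually_le_smu_add_smul (hp : 1 ≤ p) (hμ : IsConvSemigroup p μ)
    (hμ₀ : WContinuousAtZero p μ) (hv : HasDerivAt v e t) (hw : DifferentiableAt ℝ (v t) x)
    (hA : HasGenerator μ (v t) Av) (b : Ed d) (hε : 0 < ε) :
    ∀ᶠ h in 𝓝[>] 0, v t x + h * (Av x + inner ℝ (gradient (v t) x) b - e x - ε) ≤
      Smu μ h (v (t - h)) (x + h • b) := by
  have hbuc := (isC0_coe (v t)).isBUC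
  have hneg := (isC0_coe e).isBUC.const_mul (-1)
  have hcont : Continuous fun h : ℝ => Av (x + h • b) - e (x + h • b) := by
    have := hA.continuous hμ hbuc
    fun_prop
  have hlim : Tendsto (fun h : ℝ => Av (x + h • b) - e (x + h • b)) (𝓝[>] 0)
      (𝓝 (Av x - e x)) :=
    (hcont.tendsto' 0 _ (by simp)).mono_left nhdsWithin_le_nhds
  have hε₄ : 0 < ε / 4 := by positivity
  filter_upwards [self_mem_nhdsWithin, eventually_abs_sub_le_of_hasDerivAt hv hε₄,
    hA.eventually_abs_smu_add_const_mul_sub_le hp hμ hμ₀ hbuc hneg hε₄,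
    eventually_add_mul_inner_sub_le hw b hε₄,
    hlim.eventually_const_lt (show Av x - e x - ε / 4 < Av x - e x by linarith)]
    with h hpos hderiv hgen hgrad hrate
  rw [mem_Ioi] at hpos
  have hmono := (isMonetaryOp_smu hμ hpos.le).le_add_const (hbuc.add (hneg.const_mul h))
    (isC0_coe (v (t - h))).isBUC (k := ε / 4 * h)
    (fun y => by linarith [(abs_le.1 (hderiv y)).1]) (x + h • b)
  have hrate' := mul_le_mul_of_nonneg_left hrate.le hpos.le
  linarith [(abs_le.1 (hgen (x + h • b))).1]

theorem add_inner_sub_le_of_le_slim (hp : 1 < p) (hφ : IsPenalty p φ) (hμ : IsConvSemigroup p μ)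
    (hμ₀ : WContinuousAtZero p μ) (hf : IsBUC f) (ht : 0 < t) (hv : HasDerivAt v e t)
    (hw : DifferentiableAt ℝ (v t) x) (hA : HasGenerator μ (v t) Av)
    (hle : ∀ s > 0, ∀ y, v s y ≤ Slim p φ μ s f y) (heq : v t x = Slim p φ μ t f x)
    {b : Ed d} {c : ℝ} (hb : PenaltyLE φ ‖b‖ c) :
    Av x + inner ℝ (gradient (v t) x) b - c ≤ e x := by
  refine le_of_forall_pos_le_add fun ε hε => ?_
  obtain ⟨m, hm, hmt⟩ := ((tendsto_dyadicStep.eventually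
    (eventually_le_smu_add_smul hp.le hμ hμ₀ hv hw hA b hε)).and
    (tendsto_dyadicStep.eventually (Ioo_mem_nhdsGT ht))).exists
  obtain ⟨hδ, hδt⟩ := hmt
  have hδt' : 0 < t - dyadicStep m := sub_pos.2 hδt
  have hmono := (isMonetaryOp_smu hμ hδ.le).mono (isC0_coe (v (t - dyadicStep m))).isBUC
    ((isMonetaryOp_slim hp.le hφ hμ hδt'.le).isBUC hf) (hle _ hδt') (x + dyadicStep m • b)
  have hdpp := smu_add_smul_sub_le_slim hp.le hφ hμ m hδt'.le hf hb x
  rw [add_sub_cancel, ← heq] at hdpp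
  have hscaled : dyadicStep m * (Av x + inner ℝ (gradient (v t) x) b - e x - ε - c) ≤ 0 := by
    linarith
  linarith [nonpos_of_mul_nonpos_right hscaled hδ]

theorem add_phiStar_le_of_le_slim (hp : 1 < p) (hφ : IsPenalty p φ) (hμ : IsConvSemigroup p μ)
    (hμ₀ : WContinuousAtZero p μ) (hf : IsBUC f) (ht : 0 < t) (hv : HasDerivAt v e t)
    (hw : DifferentiableAt ℝ (v t) x) (hA : HasGenerator μ (v t) Av)
    (hle : ∀ s > 0, ∀ y, v s y ≤ Slim p φ μ s f y) (heq : v t x = Slim p φ μ t f x) :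
    (Av x : EReal) + (phiStar φ ‖gradient (v t) x‖₊ : EReal) ≤ (e x : EReal) := by
  have hdir (b : Ed d) (c : ℝ) (hb : PenaltyLE φ ‖b‖ c) :
      inner ℝ (gradient (v t) x) b - c ≤ e x - Av x := by
    linarith [add_inner_sub_le_of_le_slim hp hφ hμ hμ₀ hf ht hv hw hA hle heq hb]
  have hnonneg : 0 ≤ e x - Av x := by
    simpa using hdir 0 0 (by simpa using hφ.penaltyLE_zero)
  calc (Av x : EReal) + (phiStar φ ‖gradient (v t) x‖₊ : EReal)
      ≤ (Av x : EReal) + (ENNReal.ofReal (e x - Av x) : EReal) := by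
        gcongr
        exact_mod_cast phiStar_nnnorm_le_ofReal hdir
    _ = (e x : EReal) := by
        rw [EReal.coe_ennreal_ofReal, max_eq_left hnonneg, ← EReal.coe_add, add_sub_cancel]

end Supersolution

/-! ### The subsolution property -/

section Growth

theorem norm_fderiv_eq_norm_gradient {E : Type*} [NormedAddCommGroup E] [InnerProductSpace ℝ E]
    [CompleteSpace E] (w : E → ℝ) (x : E) : ‖fderiv ℝ w x‖ = ‖gradient w x‖ :=
  ((InnerProductSpace.toDual ℝ E).symm.norm_map _).symm

theorem le_add_mul_norm_sub_of_norm_gradient_le {E : Type*} [NormedAddCommGroup E]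
    [InnerProductSpace ℝ E] [CompleteSpace E] {w : E → ℝ} {s : Set E} {C : ℝ} (hs : Convex ℝ s)
    (hw : ∀ z ∈ s, DifferentiableAt ℝ w z) (hC : ∀ z ∈ s, ‖gradient w z‖ ≤ C) {a b : E}
    (ha : a ∈ s) (hb : b ∈ s) : w b ≤ w a + C * ‖b - a‖ := by
  have hle := hs.norm_image_sub_le_of_norm_fderiv_le hw
    (fun z hz => (norm_fderiv_eq_norm_gradient w z).trans_le (hC z hz)) ha hb
  linarith [le_abs_self (w b - w a), Real.norm_eq_abs (w b - w a)]

variable {d : ℕ} {p : ℝ} {w : Ed d → ℝ} {ε : ℝ}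

namespace IsC01

theorem differentiable (hw : IsC01 w) : Differentiable ℝ w :=
  hw.2.1.differentiable one_ne_zero

theorem continuous_gradient (hw : IsC01 w) : Continuous (gradient w) :=
  (InnerProductSpace.toDual ℝ (Ed d)).symm.continuous.comp (hw.2.1.continuous_fderiv one_ne_zero)

theorem exists_norm_gradient_le (hw : IsC01 w) : ∃ M, ∀ z, ‖gradient w z‖ ≤ M := by
  have hC₀ : IsC0 fun z => ‖gradient w z‖ :=
    ⟨hw.continuous_gradient.norm, by simpa using hw.2.2.norm⟩
  simpa only [abs_norm] using hC₀.isBUC.bounded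

-- Displacements of speed at least `R` are absorbed by the `p`-th power, slow ones starting near `x`
-- only see gradients close to `∇w x`, and slow ones starting far from `x` cost at most `h * L`.
theorem exists_growth_bound (hw : IsC01 w) (hp : 1 < p) (x : Ed d) (hε : 0 < ε) :
    ∃ L δ : ℝ, 0 < δ ∧ ∀ᶠ h in 𝓝[>] 0, ∀ a b, w b ≤ w a + h * (L * min 1 (‖a - x‖ / δ)) +
      (‖gradient w x‖ + ε) * ‖b - a‖ + ε * (h * (‖b - a‖ / h) ^ p) := by
  obtain ⟨M, hM⟩ := hw.exists_norm_gradient_le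
  have hM₀ : 0 ≤ M := (norm_nonneg _).trans (hM x)
  obtain ⟨R, hR₁, hR⟩ := exists_mul_le_mul_rpow hp M hε
  obtain ⟨δ, hδ, hball⟩ := Metric.eventually_nhds_iff_ball.1
    (hw.continuous_gradient.norm.continuousAt.eventually_lt_const
      (show ‖gradient w x‖ < ‖gradient w x‖ + ε by linarith))
  refine ⟨M * R, δ / 2, half_pos hδ, ?_⟩
  have hlim : Tendsto (fun h : ℝ => h * R) (𝓝[>] 0) (𝓝 0) :=
    ((continuous_mul_const R).tendsto' 0 0 (zero_mul R)).mono_left nhdsWithin_le_nhds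
  filter_upwards [hlim.eventually_lt_const (half_pos hδ), self_mem_nhdsWithin] with h hhR hpos a b
  rw [mem_Ioi] at hpos
  have hlip : w b ≤ w a + M * ‖b - a‖ := le_add_mul_norm_sub_of_norm_gradient_le convex_univ
    (fun z _ => hw.differentiable z) (fun z _ => hM z) (mem_univ a) (mem_univ b)
  have hmin : 0 ≤ h * (M * R * min 1 (‖a - x‖ / (δ / 2))) := by positivity
  have hlin : 0 ≤ (‖gradient w x‖ + ε) * ‖b - a‖ := by positivity
  have hpow : 0 ≤ ε * (h * (‖b - a‖ / h) ^ p) := by positivity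
  rcases le_or_gt R (‖b - a‖ / h) with hfast | hslow
  · have hfast' := mul_le_mul_of_nonneg_left (hR _ hfast) hpos.le
    rw [mul_left_comm, mul_div_cancel₀ _ hpos.ne'] at hfast'
    linarith
  rw [div_lt_iff₀' hpos] at hslow
  rcases lt_or_ge ‖a - x‖ (δ / 2) with hnear | hfar
  · have hb : ‖b - x‖ < δ := by linarith [norm_sub_le_norm_sub_add_norm_sub b a x]
    have hlocal := le_add_mul_norm_sub_of_norm_gradient_le (convex_ball x δ)
      (fun z _ => hw.differentiable z) (fun z hz => (hball z hz).le)
      (mem_ball_iff_norm.2 (hnear.trans (half_lt_self hδ))) (mem_ball_iff_norm.2 hb)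
    linarith
  · rw [min_eq_left ((one_le_div (half_pos hδ)).2 hfar)]
    linarith [mul_le_mul_of_nonneg_left hslow.le hM₀]

end IsC01

end Growth

section Subsolution

variable {d : ℕ} {p : ℝ} {φ : ℝ≥0 → ℝ≥0∞} {μ : ℝ → Measure (Ed d)} {t ε : ℝ} {x : Ed d}
  {f Av : Ed d → ℝ} {v : ℝ → C₀(Ed d, ℝ)} {e : C₀(Ed d, ℝ)}

theorem exists_isBUC_eventually_le_growth (hp : 1 < p) (hv : HasDerivAt v e t)
    (hw : IsC01 (v t)) (x : Ed d) (hε : 0 < ε) :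
    ∃ q, IsBUC q ∧ q x = ε - e x ∧ ∀ᶠ h in 𝓝[>] 0, ∀ a b, v (t - h) b ≤
      v t a + h * q a + (‖gradient (v t) x‖ + ε) * ‖b - a‖ + ε * (h * (‖b - a‖ / h) ^ p) := by
  have hε₂ := half_pos hε
  have hneg := (isC0_coe e).isBUC.const_mul (-1)
  obtain ⟨K, -, hmod⟩ := hneg.exists_hasAffineModulus hε₂
  obtain ⟨L, δ, hδ, hgrowth⟩ := hw.exists_growth_bound hp x hε₂
  refine ⟨fun a => -1 * e a + L * min 1 (‖a - x‖ / δ) + ε,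
    (hneg.add ((isBUC_min_one_norm_sub_div x hδ).const_mul L)).add (.const ε),
    by simp [sub_eq_neg_add], ?_⟩
  have hlim : Tendsto (fun h : ℝ => h * K) (𝓝[>] 0) (𝓝 0) :=
    ((continuous_mul_const K).tendsto' 0 0 (zero_mul K)).mono_left nhdsWithin_le_nhds
  filter_upwards [self_mem_nhdsWithin, hgrowth, eventually_abs_sub_le_of_hasDerivAt hv hε₂,
    hlim.eventually_lt_const hε₂] with h hpos hgr hderiv hhK a b
  rw [mem_Ioi] at hpos
  have hmod' := mul_le_mul_of_nonneg_left (hmod a b) hpos.le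
  have hlin : h * K * ‖b - a‖ ≤ ε / 2 * ‖b - a‖ := by gcongr
  have hpow : 0 ≤ ε / 2 * (h * (‖b - a‖ / h) ^ p) := by positivity
  linarith [hgr a b, (abs_le.1 (hderiv b)).2]

theorem eventually_stepOp_le_add_mul (hp : 1 < p) (hφ : IsPenalty p φ) (hμ : IsConvSemigroup p μ)
    (hμ₀ : WContinuousAtZero p μ) (hv : HasDerivAt v e t) (hw : IsC01 (v t))
    (hA : HasGenerator μ (v t) Av) (x : Ed d) {ζ : ℝ} (hζ : 0 < ζ) :
    ∀ᶠ h in 𝓝[>] 0, stepOp p φ μ h (v (t - h)) x ≤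
      v t x + h * (Av x - e x + (phiStar φ ‖gradient (v t) x‖₊).toReal + ζ) := by
  obtain ⟨ε, hε, hεζ, hconj⟩ := hφ.exists_perturbed_conjugate_le hp ‖gradient (v t) x‖₊
    (ζ := ζ / 3) (by positivity)
  obtain ⟨q, hq, hqx, hgrowth⟩ := exists_isBUC_eventually_le_growth hp hv hw x hε
  have hbuc := (isC0_coe (v t)).isBUC
  filter_upwards [self_mem_nhdsWithin, hgrowth, hA.eventually_abs_smu_add_const_mul_sub_le hp.le hμ
    hμ₀ hbuc hq (show 0 < ζ / 3 by positivity)] with h hpos hgr hgen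
  rw [mem_Ioi] at hpos
  have hstep := sop_le_of_growth hp.le hφ (hμ.2.2 h hpos.le) hpos (isC0_coe (v (t - h))).isBUC
    (hbuc.add (hq.const_mul h)) (by positivity) hε.le hconj hgr x
  have hsmu := (abs_le.1 (hgen x)).2
  have hεh := mul_le_mul_of_nonneg_left hεζ hpos.le
  rw [Smu, hqx] at hsmu
  rw [stepOp]
  linarith

theorem le_add_phiStar_of_slim_le (hp : 1 < p) (hφ : IsPenalty p φ) (hμ : IsConvSemigroup p μ)
    (hμ₀ : WContinuousAtZero p μ) (hf : IsC0 f) (ht : 0 < t) (hv : HasDerivAt v e t)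
    (hw : IsC01 (v t)) (hA : HasGenerator μ (v t) Av)
    (hle : ∀ s > 0, ∀ y, Slim p φ μ s f y ≤ v s y) (heq : v t x = Slim p φ μ t f x) :
    (e x : EReal) ≤ (Av x : EReal) + (phiStar φ ‖gradient (v t) x‖₊ : EReal) := by
  suffices hreal : e x ≤ Av x + (phiStar φ ‖gradient (v t) x‖₊).toReal by
    rw [← EReal.coe_ennreal_toReal (phiStar_ne_top hp hφ _)]
    exact_mod_cast hreal
  refine le_of_forall_pos_le_add fun ζ hζ => ?_
  obtain ⟨m, hm, hδ, hδt⟩ := ((tendsto_dyadicStep.eventually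
    (eventually_stepOp_le_add_mul hp hφ hμ hμ₀ hv hw hA x hζ)).and
    (tendsto_dyadicStep.eventually (Ioo_mem_nhdsGT ht))).exists
  have hδt' : 0 < t - dyadicStep m := sub_pos.2 hδt
  have hmono := (isMonetaryOp_stepOp (one_pos.trans hp) hφ hμ hδ.le).mono
    (isC0_slim hp hφ hμ hδt'.le hf).isBUC (isC0_coe (v (t - dyadicStep m))).isBUC
    (hle _ hδt') x
  have hdpp := slim_dyadicStep_add_le hp hφ hμ m hδt'.le hf x
  rw [add_sub_cancel, ← heq] at hdpp
  have hscaled : 0 ≤ dyadicStep m *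
      (Av x - e x + (phiStar φ ‖gradient (v t) x‖₊).toReal + ζ) := by
    linarith
  linarith [nonneg_of_mul_nonneg_right hscaled hδ]

end Subsolution

/-! ### The solution curve -/

section Curve

variable {d : ℕ} {p : ℝ} {φ : ℝ≥0 → ℝ≥0∞} {μ : ℝ → Measure (Ed d)} {f : Ed d → ℝ}

/-- The curve `t ↦ 𝒮(t)f` in `C₀`, extended to negative times by the constant `𝒮(0)f`. -/
def slimCurve (hp : 1 < p) (hφ : IsPenalty p φ) (hμ : IsConvSemigroup p μ) (hf : IsC0 f)
    (t : ℝ) : C₀(Ed d, ℝ) :=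
  (isC0_slim hp hφ hμ (le_max_right t 0) hf).toC0

theorem slimCurve_apply (hp : 1 < p) (hφ : IsPenalty p φ) (hμ : IsConvSemigroup p μ)
    (hf : IsC0 f) {t : ℝ} (ht : 0 ≤ t) (x : Ed d) :
    slimCurve hp hφ hμ hf t x = Slim p φ μ t f x :=
  congrArg (fun s => Slim p φ μ s f x) (max_eq_left ht)

theorem continuousOn_slimCurve (hp : 1 < p) (hφ : IsPenalty p φ) (hμ : IsConvSemigroup p μ)
    (hμ₀ : WContinuousAtZero p μ) (hf : IsC0 f) :
    ContinuousOn (slimCurve hp hφ hμ hf) (Ici 0) := by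
  refine Metric.continuousOn_iff.2 fun t ht ε hε => ?_
  obtain ⟨η, hη, hslim⟩ := exists_abs_slim_sub_slim_le hp hφ hμ hμ₀ hf.isBUC (half_pos hε)
  refine ⟨η, hη, fun s hs hst => lt_of_le_of_lt ?_ (half_lt_self hε)⟩
  rw [Real.dist_eq, abs_lt] at hst
  rw [← ZeroAtInftyContinuousMap.dist_toBCF_eq_dist,
    BoundedContinuousFunction.dist_le (half_pos hε).le]
  intro x
  change |slimCurve hp hφ hμ hf s x - slimCurve hp hφ hμ hf t x| ≤ ε / 2
  rw [slimCurve_apply hp hφ hμ hf hs, slimCurve_apply hp hφ hμ hf ht]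
  rcases le_total t s with hts | hst'
  · exact hslim t s ht hts (by linarith) x
  · rw [abs_sub_comm]
    exact hslim s t hs hst' (by linarith) x

end Curve

/-- Feynman–Kac, convex version: `u(t) = 𝒮(t)f` is a viscosity solution of
`∂_t u = A^μ u + φ*(|∇u|)` with `u(0) = f`. -/
theorem stmt_3 (d : ℕ) (hd : 1 ≤ d) (p : ℝ) (hp : 1 < p)
    (φ : ℝ≥0 → ℝ≥0∞) (hφ : IsPenalty p φ)
    (μ : ℝ → Measure (Ed d)) (hμ : IsConvSemigroup p μ) (hμ0 : WContinuousAtZero p μ)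
    (f : C₀(Ed d, ℝ)) :
    ∃ u : ℝ → C₀(Ed d, ℝ),
      (∀ t : ℝ, 0 ≤ t → ∀ x, u t x = Slim p φ μ t (⇑f) x) ∧
      IsViscositySubsol φ μ f u ∧ IsViscositySupersol φ μ f u := by
  have hf := isC0_coe f
  have hu (t : ℝ) (ht : 0 ≤ t) (x : Ed d) := slimCurve_apply hp hφ hμ hf ht x
  have hcont := continuousOn_slimCurve hp hφ hμ hμ0 hf
  have hinit : slimCurve hp hφ hμ hf 0 = f := by
    ext x
    rw [hu 0 le_rfl, slim_zero hp.le hφ hμ hf.isBUC]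
  refine ⟨slimCurve hp hφ hμ hf, hu, ⟨hcont, hinit, ?_⟩, ⟨hcont, hinit, ?_⟩⟩
  · intro t ht x v v' hv hle heq Av hA
    obtain ⟨hderiv, -, hw⟩ := hv t ht
    exact le_add_phiStar_of_slim_le hp hφ hμ hμ0 hf ht hderiv hw hA
      (fun s hs y => hu s hs.le y ▸ hle s hs y) (heq.trans (hu t ht.le x))
  · intro t ht x v v' hv hle heq Av hA
    obtain ⟨hderiv, -, hw⟩ := hv t ht
    exact add_phiStar_le_of_le_slim hp hφ hμ hμ0 hf.isBUC ht hderiv (hw.differentiable x) hA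
      (fun s hs y => hu s hs.le y ▸ hle s hs y) (heq.trans (hu t ht.le x))
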